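/- Let P = {P_n : n < ω} be a partition of ω into infinitely many infinite sets with min P_i < min P_j whenever i < j, and let I = (I_n)_{n<ω} be a sequence of subsets of ω with n ∈ I_n for all n. For every finite Souslin measurable colouring c of 𝓔^{P,I}_∞ and every E ∈ 𝓔^{P,I}_∞, there exists F ∈ 𝓔^{P,I}_∞ with F ≤ E such that c is constant on 𝓔^{P,I}_∞ ↾ F = {F' ∈ 𝓔^{P,I}_∞ : F' ≤ F}. -/

import Mathlib

open Set

namespace DualRamsey

/-- `F` is a coarsening of `E` (written `F ≤ E` in the paper): every class of `F`
is a union of classes of `E`. -/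
def Coarsens {X : Type*} (F E : Setoid X) : Prop := ∀ a b, E.r a b → F.r a b

/-- The set of equivalence classes of a setoid. -/
def classes {X : Type*} (E : Setoid X) : Set (Set X) := {C | ∃ x, C = {y | E.r x y}}

/-- The set of minimal representatives of the classes of an equivalence relation on ℕ. -/
def minReps (E : Setoid ℕ) : Set ℕ := {n | ∀ m, E.r n m → n ≤ m}

/-- `pRep E k` is `p_k(E)`, the k-th minimal representative in increasing order. -/
noncomputable def pRep (E : Setoid ℕ) (k : ℕ) : ℕ := Nat.nth (· ∈ minReps E) k

/-- `approx n E` is the n-th approximation `r_n(E)`: `E` restricted to `{0,…,p_n(E)-1}`,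
identified with its graph. -/
noncomputable def approx (n : ℕ) (E : Setoid ℕ) : Set (ℕ × ℕ) :=
  {q | q.1 < pRep E n ∧ q.2 < pRep E n ∧ E.r q.1 q.2}

/-- Basic set `[a, E]` relative to a space `S` of equivalence relations. -/
noncomputable def basicSet (S : Set (Setoid ℕ)) (a : Set (ℕ × ℕ)) (E : ↥S) : Set ↥S :=
  {F | Coarsens F.1 E.1 ∧ ∃ n, approx n F.1 = a}

/-- The Ellentuck topology on a space `S` of equivalence relations. -/
noncomputable def ellentuckTop (S : Set (Setoid ℕ)) : TopologicalSpace ↥S :=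
  TopologicalSpace.generateFrom {U | ∃ a E, U = basicSet S a E}

def IsRamsey (S : Set (Setoid ℕ)) (X : Set ↥S) : Prop :=
  ∀ (a : Set (ℕ × ℕ)) (B : ↥S), (basicSet S a B).Nonempty →
    ∃ A ∈ basicSet S a B, basicSet S a A ⊆ X ∨ basicSet S a A ∩ X = ∅

def IsRamseyNull (S : Set (Setoid ℕ)) (X : Set ↥S) : Prop :=
  ∀ (a : Set (ℕ × ℕ)) (B : ↥S), (basicSet S a B).Nonempty →
    ∃ A ∈ basicSet S a B, basicSet S a A ∩ X = ∅

/-- The property of Baire with respect to the Ellentuck topology. -/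
noncomputable def HasBP (S : Set (Setoid ℕ)) (X : Set ↥S) : Prop :=
  ∃ O M : Set ↥S, (ellentuckTop S).IsOpen O ∧ @IsMeagre _ (ellentuckTop S) M ∧
    X = (O \ M) ∪ (M \ O)

/-- The Souslin operation applied to a scheme indexed by finite sequences of naturals. -/
def souslinOp {X : Type*} (A : List ℕ → Set X) : Set X :=
  ⋃ x : ℕ → ℕ, ⋂ n : ℕ, A ((List.range n).map x)

/-- `Y` belongs to the smallest field of sets containing all `t`-open sets and
closed under the Souslin operation. -/
def SouslinMeasurable {X : Type*} (t : TopologicalSpace X) (Y : Set X) : Prop :=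
  ∀ 𝒜 : Set (Set X),
    (∀ U, t.IsOpen U → U ∈ 𝒜) →
    (∀ A ∈ 𝒜, Aᶜ ∈ 𝒜) →
    (∀ A ∈ 𝒜, ∀ B ∈ 𝒜, A ∪ B ∈ 𝒜) →
    (∀ f : List ℕ → Set X, (∀ s, f s ∈ 𝒜) → souslinOp f ∈ 𝒜) →
    Y ∈ 𝒜

/-- The graph of an equivalence relation as a boolean-valued function. -/
noncomputable def graphMap {X : Type*} (E : Setoid X) : X × X → Bool :=
  fun q => @decide (E.r q.1 q.2) (Classical.dec _)

/-- The metrizable topology on a space of equivalence relations, as a subspace of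
`2^(X × X)` via graphs. -/
noncomputable def graphTop {X : Type*} (S : Set (Setoid X)) : TopologicalSpace ↥S :=
  TopologicalSpace.induced (fun E => graphMap E.1) inferInstance



/-- `σ(k)`: the largest `n` such that `2^n` divides `k+1`. -/
def sigmaSeq (k : ℕ) : ℕ := padicValNat 2 (k + 1)

/-- `𝓔^P_∞` for a partition `P` of ℕ into infinitely many infinite pieces: the
`P`-alternating equivalence relations, i.e. those with infinitely many classes whose
`k`-th minimal representative lies in `P (σ k)`. -/
noncomputable def EPaltInf (P : ℕ → Set ℕ) : Set (Setoid ℕ) :=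
  {E | (classes E).Infinite ∧ ∀ k : ℕ, pRep E k ∈ P (sigmaSeq k)}

/-- `𝓔^{P,I}_∞`: the `P`-alternating equivalence relations such that moreover every
class whose minimum lies in `P n` is contained in `⋃ {P m : m ∈ I n}`. -/
noncomputable def EPaltI (P : ℕ → Set ℕ) (I : ℕ → Set ℕ) : Set (Setoid ℕ) :=
  {E | E ∈ EPaltInf P ∧
    ∀ x ∈ minReps E, ∀ n, x ∈ P n → ∀ y, E.r x y → ∃ m ∈ I n, y ∈ P m}


/-!
Work with the functions `e : ℕ → ℕ` sending a point to the minimum of its class. If no `E₀ ≤ E` is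
*reduced*, some coarsening of `E` has no proper coarsening at all and there is nothing to prove.
Below a reduced `E₀`, every point can be merged, whatever happened before, into one of the finitely
many classes that begin at or below a fixed point `q`. Then the coarsenings of `E₀` satisfy the
axioms of a topological Ramsey space: amalgamation holds because points may always be thrown into
those initial classes, and the pigeonhole principle is a version of the Carlson–Simpson theorem on
variable words in which the positions of the variables are prescribed by their types. The latter is
proved with idempotent ultrafilters. In any such space the Ellentuck argument shows that Souslin
measurable sets are completely Ramsey.
-/

section General

theorem exists_seq_of_invariant {α : Type*} (Inv : ℕ → α → Prop) (Rel : ℕ → α → α → Prop) (a : α)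
    (zero : Inv 0 a) (succ : ∀ j x, Inv j x → ∃ y, Inv (j + 1) y ∧ Rel j x y) :
    ∃ f : ℕ → α, f 0 = a ∧ (∀ j, Inv j (f j)) ∧ ∀ j, Rel j (f j) (f (j + 1)) := by
  have : Nonempty α := ⟨a⟩
  choose! next inv rel using succ
  let f : ℕ → α := fun n => Nat.rec a next n
  have hf : ∀ j, Inv j (f j) := fun j => Nat.rec zero (fun j ih => inv j (f j) ih) j
  exact ⟨f, rfl, hf, fun j => rel j (f j) (hf j)⟩

theorem eqOn_Iio_of_stable {β : Type*} {f : ℕ → ℕ → β} {N : ℕ → ℕ} (hN : StrictMono N)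
    (hf : ∀ j, EqOn (f (j + 1)) (f j) (Iio (N j))) {i j : ℕ} (hij : i ≤ j) :
    EqOn (f j) (f i) (Iio (N i)) := by
  induction j, hij using Nat.le_induction with
  | base => exact eqOn_refl _ _
  | succ j hij ih =>
    exact fun z hz => (hf j (lt_of_lt_of_le hz (hN.monotone hij))).trans (ih hz)

theorem exists_limit_of_stable {β : Type*} {f : ℕ → ℕ → β} {N : ℕ → ℕ} (hN : StrictMono N)
    (hf : ∀ j, EqOn (f (j + 1)) (f j) (Iio (N j))) :
    ∃ g : ℕ → β, ∀ j, EqOn g (f j) (Iio (N j)) := by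
  refine ⟨fun z => f (z + 1) z, fun j z hz => ?_⟩
  rcases le_total (z + 1) j with h | h
  · exact (eqOn_Iio_of_stable hN hf h ((Nat.lt_succ_self z).trans_le hN.le_apply)).symm
  · exact eqOn_Iio_of_stable hN hf h hz

theorem eventually_iff_eventually {α : Type*} (U : Ultrafilter α) (p : α → Prop) :
    ∀ᶠ x in U, (p x ↔ ∀ᶠ y in U, p y) := by
  by_cases h : ∀ᶠ y in U, p y
  · simp only [h, iff_true]
  · simpa only [h, iff_false] using Ultrafilter.eventually_not.2 h

/-- The part of `souslinOp A` that is witnessed by branches through `s`. -/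
def souslinCylinder {X : Type*} (A : List ℕ → Set X) (s : List ℕ) : Set X :=
  {F | ∃ x : ℕ → ℕ, s = (List.range s.length).map x ∧ ∀ n, F ∈ A ((List.range n).map x)}

theorem souslinOp_eq_souslinCylinder_nil {X : Type*} (A : List ℕ → Set X) :
    souslinOp A = souslinCylinder A [] := by
  ext F
  simp [souslinOp, souslinCylinder]

theorem souslinCylinder_subset {X : Type*} (A : List ℕ → Set X) (s : List ℕ) :
    souslinCylinder A s ⊆ A s := by
  rintro F ⟨x, hs, hx⟩
  rw [hs]
  exact hx _

theorem souslinCylinder_subset_iUnion {X : Type*} (A : List ℕ → Set X) (s : List ℕ) :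
    souslinCylinder A s ⊆ ⋃ i, souslinCylinder A (s ++ [i]) := by
  rintro F ⟨x, hs, hx⟩
  refine mem_iUnion.2 ⟨x s.length, x, ?_, hx⟩
  rw [List.length_append, List.length_singleton, List.range_succ, List.map_append, ← hs,
    List.map_singleton]

theorem mem_souslinOp_of_forall_exists {X : Type*} {A : List ℕ → Set X} {F : X} (h₀ : F ∈ A [])
    (h : ∀ s, F ∈ A s → ∃ i, F ∈ A (s ++ [i])) : F ∈ souslinOp A := by
  obtain ⟨g, hg₀, hmem, hg⟩ := exists_seq_of_invariant (fun _ s => F ∈ A s)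
    (fun _ s s' => ∃ i, s' = s ++ [i]) [] h₀ fun _ s hs => by
      obtain ⟨i, hi⟩ := h s hs
      exact ⟨_, hi, i, rfl⟩
  choose x hx using hg
  have hgx : ∀ n, g n = (List.range n).map x := fun n => by
    induction n with
    | zero => rw [hg₀, List.range_zero, List.map_nil]
    | succ n ih => rw [hx, ih, List.range_succ, List.map_append, List.map_singleton]
  exact mem_iUnion.2 ⟨x, mem_iInter.2 fun n => hgx n ▸ hmem n⟩

theorem SouslinMeasurable.preimage {X Y : Type*} {tX : TopologicalSpace X} {tY : TopologicalSpace Y}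
    {f : X → Y} (hf : @Continuous X Y tX tY f) {A : Set Y} (hA : SouslinMeasurable tY A) :
    SouslinMeasurable tX (f ⁻¹' A) := by
  intro 𝒜 hopen hcompl hunion hsouslin
  refine hA {B | f ⁻¹' B ∈ 𝒜} (fun U hU => hopen _ (hf.isOpen_preimage U hU))
    (fun B hB => hcompl _ hB) (fun B hB C hC => hunion _ hB _ hC) (fun s hs => ?_)
  simpa only [mem_ofPred_eq, souslinOp, preimage_iUnion, preimage_iInter] using
    hsouslin (fun l => f ⁻¹' s l) hs

end General

/-! ### Idempotent ultrafilters and variable words -/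

section Words

attribute [local instance] Ultrafilter.mul Ultrafilter.semigroup

/-- Partial words over the alphabet `α`, multiplied by letting the left factor take precedence. -/
def PartialWord (α : Type*) := ℕ → Option α

instance (α : Type*) : Semigroup (PartialWord α) where
  mul v w := fun z => (v z).or (w z)
  mul_assoc _ _ _ := funext fun _ => Option.or_assoc

namespace PartialWord

variable {α β L : Type*}

theorem mul_apply (v w : PartialWord α) (z : ℕ) : (v * w) z = (v z).or (w z) := rfl

/-- Apply a function to every letter of a partial word. -/
def map (f : α → β) (w : PartialWord α) : PartialWord β := fun z => (w z).map f

theorem map_apply_eq_none {f : α → β} {w : PartialWord α} {z : ℕ} (h : w z = none) :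
    map f w z = none :=
  Option.map_eq_none_iff.2 h

theorem map_mul (f : α → β) (v w : PartialWord α) : map f (v * w) = map f v * map f w :=
  funext fun _ => Option.map_or

/-- The support of the partial word `w` lies below `N`. -/
def BoundedBy (w : PartialWord α) (N : ℕ) : Prop := ∀ z, N ≤ z → w z = none

theorem BoundedBy.map {w : PartialWord α} {N : ℕ} (h : w.BoundedBy N) (f : α → β) :
    (w.map f).BoundedBy N := fun z hz => map_apply_eq_none (h z hz)

theorem BoundedBy.mul {v w : PartialWord α} {M N : ℕ} (hv : v.BoundedBy M) (hw : w.BoundedBy N) :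
    (v * w).BoundedBy (max M N) := fun z hz => by
  rw [mul_apply, hv z (le_of_max_le_left hz), hw z (le_of_max_le_right hz), Option.none_or]

/-- Substitution of the letter `a` for the variable. A variable word is a partial word over
`Option L`, the letter `none` being the variable; the result has the same type but no variable. -/
def subst (a : L) : PartialWord (Option L) → PartialWord (Option L) :=
  map fun o => some (o.getD a)

theorem subst_mul (a : L) (v w : PartialWord (Option L)) :
    subst a (v * w) = subst a v * subst a w :=
  map_mul _ v w

/-- The finitely supported variable words that vanish below `n` and whose variables sit in `S`. -/
def tails (L : Type*) (S : Set ℕ) (n : ℕ) : Set (PartialWord (Option L)) :=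
  {w | (∃ N, w.BoundedBy N) ∧ (∀ z < n, w z = none) ∧ ∀ z, w z = some none → z ∈ S}

/-- The first letter of the variable word `w` is the variable, at position `k`. -/
def VarFirstAt (w : PartialWord (Option L)) (k : ℕ) : Prop :=
  w k = some none ∧ ∀ z < k, w z = none

theorem mul_mem_tails {S : Set ℕ} {n : ℕ} {v w : PartialWord (Option L)} (hv : v ∈ tails L S n)
    (hw : w ∈ tails L S n) : v * w ∈ tails L S n := by
  obtain ⟨⟨N, hN⟩, hvn, hvS⟩ := hv
  obtain ⟨⟨N', hN'⟩, hwn, hwS⟩ := hw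
  refine ⟨⟨max N N', hN.mul hN'⟩, fun z hz => ?_, fun z hz => ?_⟩
  · rw [mul_apply, hvn z hz, hwn z hz, Option.none_or]
  · rcases Option.or_eq_some_iff.1 hz with h | h
    exacts [hvS z h, hwS z h.2]

theorem tails_mono {S T : Set ℕ} (h : S ⊆ T) (n : ℕ) : tails L S n ⊆ tails L T n :=
  fun _ hw => ⟨hw.1, hw.2.1, fun z hz => h (hw.2.2 z hz)⟩

theorem subst_mem_tails {S : Set ℕ} {n : ℕ} (a : L) {v : PartialWord (Option L)}
    (hv : v ∈ tails L S n) : subst a v ∈ tails L ∅ n := by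
  obtain ⟨⟨N, hN⟩, hvn, -⟩ := hv
  refine ⟨⟨N, hN.map _⟩, fun z hz => map_apply_eq_none (hvn z hz), fun z hz => ?_⟩
  obtain ⟨o, -, ho⟩ := Option.map_eq_some_iff.1 hz
  exact absurd ho (Option.some_ne_none _)

theorem subst_eq_self {n : ℕ} (a : L) {v : PartialWord (Option L)} (hv : v ∈ tails L ∅ n) :
    subst a v = v := by
  funext z
  match h : v z with
  | none => rw [subst, map, h, Option.map_none]
  | some none => exact (hv.2.2 z h).elim
  | some (some b) => rw [subst, map, h, Option.map_some, Option.getD_some]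

theorem VarFirstAt.mul {v w : PartialWord (Option L)} {k : ℕ} {S : Set ℕ} (hv : VarFirstAt v k)
    (hw : w ∈ tails L S (k + 1)) : VarFirstAt (v * w) k := by
  refine ⟨by rw [mul_apply, hv.1, Option.some_or], fun z hz => ?_⟩
  rw [mul_apply, hv.2 z hz, hw.2.1 z (Nat.lt_succ_of_lt hz), Option.none_or]

open Classical in
/-- The variable word consisting of a single variable at `x`. -/
noncomputable def singleVar (L : Type*) (x : ℕ) : PartialWord (Option L) :=
  fun z => if z = x then some none else none

theorem singleVar_apply_of_ne {x z : ℕ} (h : z ≠ x) : singleVar L x z = none := if_neg h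

theorem varFirstAt_singleVar (x : ℕ) : VarFirstAt (singleVar L x) x :=
  ⟨if_pos rfl, fun _ hz => singleVar_apply_of_ne hz.ne⟩

theorem singleVar_mem_tails {S : Set ℕ} {n x : ℕ} (hx : x ∈ S) (hn : n ≤ x) :
    singleVar L x ∈ tails L S n := by
  refine ⟨⟨x + 1, fun z hz => singleVar_apply_of_ne (by omega)⟩,
    fun z hz => singleVar_apply_of_ne (by omega), fun z hz => ?_⟩
  by_contra hzS
  rw [singleVar_apply_of_ne fun h : z = x => hzS (h ▸ hx)] at hz
  exact Option.some_ne_none _ hz.symm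

/-- The ultrafilters concentrating on every tail of words whose variables sit in `S`. -/
def tailUltrafilters (L : Type*) (S : Set ℕ) : Set (Ultrafilter (PartialWord (Option L))) :=
  {V | ∀ n, ∀ᶠ w in V, w ∈ tails L S n}

/-- The members of `tailUltrafilters` concentrating on words that begin with the variable. -/
def varUltrafilters (L : Type*) (S : Set ℕ) : Set (Ultrafilter (PartialWord (Option L))) :=
  {V | V ∈ tailUltrafilters L S ∧ ∀ᶠ w : PartialWord (Option L) in V, ∃ k, VarFirstAt w k}

theorem isClosed_tailUltrafilters (S : Set ℕ) : IsClosed (tailUltrafilters L S) := by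
  have : tailUltrafilters L S = ⋂ n, {V | tails L S n ∈ V} :=
    ext fun V => by simp only [mem_iInter]; rfl
  rw [this]
  exact isClosed_iInter fun n => ultrafilter_isClosed_basic _

theorem isClosed_varUltrafilters (S : Set ℕ) : IsClosed (varUltrafilters L S) :=
  (isClosed_tailUltrafilters S).inter
    (ultrafilter_isClosed_basic {w : PartialWord (Option L) | ∃ k, VarFirstAt w k})

theorem mul_mem_tailUltrafilters {S : Set ℕ} {V W : Ultrafilter (PartialWord (Option L))}
    (hV : V ∈ tailUltrafilters L S) (hW : W ∈ tailUltrafilters L S) :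
    V * W ∈ tailUltrafilters L S := fun n =>
  (Ultrafilter.eventually_mul V W _).2 <| (hV n).mono fun _ hv =>
    (hW n).mono fun _ hw => mul_mem_tails hv hw

theorem mul_mem_varUltrafilters {S : Set ℕ} {V W : Ultrafilter (PartialWord (Option L))}
    (hV : V ∈ varUltrafilters L S) (hW : W ∈ tailUltrafilters L S) :
    V * W ∈ varUltrafilters L S :=
  ⟨mul_mem_tailUltrafilters hV.1 hW, (Ultrafilter.eventually_mul V W _).2 <|
    hV.2.mono fun _ ⟨k, hv⟩ => (hW (k + 1)).mono fun _ hw => ⟨k, hv.mul hw⟩⟩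

theorem tailUltrafilters_mono {S T : Set ℕ} (h : S ⊆ T) :
    tailUltrafilters L S ⊆ tailUltrafilters L T :=
  fun _ hV n => (hV n).mono fun _ hw => tails_mono h n hw

theorem map_subst_mem_tailUltrafilters {S : Set ℕ} (a : L)
    {V : Ultrafilter (PartialWord (Option L))} (hV : V ∈ tailUltrafilters L S) :
    V.map (subst a) ∈ tailUltrafilters L ∅ :=
  fun n => (hV n).mono fun _ hv => subst_mem_tails a hv

theorem map_subst_eq_self (a : L) {V : Ultrafilter (PartialWord (Option L))}
    (hV : V ∈ tailUltrafilters L ∅) : V.map (subst a) = V := by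
  have h : subst a =ᶠ[(V : Filter _)] id := (hV 0).mono fun v hv => subst_eq_self a hv
  exact Ultrafilter.coe_injective (by rw [Ultrafilter.coe_map, Filter.map_congr h, Filter.map_id])

theorem varUltrafilters_nonempty {S : Set ℕ} (hS : S.Infinite) :
    (varUltrafilters L S).Nonempty := by
  have : (Filter.atTop ⊓ Filter.principal S).NeBot := by
    rw [Filter.inf_principal_neBot_iff]
    intro U hU
    obtain ⟨N, hN⟩ := Filter.mem_atTop_sets.1 hU
    obtain ⟨x, hxS, hx⟩ := hS.exists_gt N
    exact ⟨x, hN x hx.le, hxS⟩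
  obtain ⟨W, hW⟩ := Ultrafilter.exists_le (Filter.atTop ⊓ Filter.principal S)
  refine ⟨W.map (singleVar L), fun n => hW ?_,
    hW (Filter.Eventually.of_forall fun x => ⟨x, varFirstAt_singleVar x⟩)⟩
  rw [Filter.mem_inf_principal]
  exact (Filter.eventually_ge_atTop n).mono fun x hn hx => singleVar_mem_tails hx hn

end PartialWord

section CompactSemigroup

theorem ultrafilter_map_mul {M N : Type*} [Semigroup M] [Semigroup N] {f : M → N}
    (hf : ∀ a b, f (a * b) = f a * f b) (U V : Ultrafilter M) :
    (U * V).map f = U.map f * V.map f := by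
  ext s
  change (∀ᶠ a in U, ∀ᶠ b in V, f (a * b) ∈ s) ↔ ∀ᶠ a in U, ∀ᶠ b in V, f a * f b ∈ s
  simp only [hf]

theorem continuous_ultrafilter_map {α β : Type*} (f : α → β) :
    Continuous fun V : Ultrafilter α => V.map f := by
  rw [ultrafilterBasis_is_basis.continuous_iff]
  rintro _ ⟨s, rfl⟩
  exact ultrafilter_isOpen_basic (f ⁻¹' s)

variable {M : Type*} [Semigroup M] [TopologicalSpace M]

/-- A nonempty closed left ideal of the subsemigroup `G`. -/
structure IsClosedLeftIdeal (G K : Set M) : Prop where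
  subset : K ⊆ G
  isClosed : IsClosed K
  nonempty : K.Nonempty
  mul_mem : ∀ a ∈ G, ∀ b ∈ K, a * b ∈ K

theorem IsClosedLeftIdeal.sInter [CompactSpace M] {G : Set M} {c : Set (Set M)}
    (hc : ∀ K ∈ c, IsClosedLeftIdeal G K) (hchain : IsChain (· ⊆ ·) c) (hne : c.Nonempty) :
    IsClosedLeftIdeal G (⋂₀ c) where
  subset := (sInter_subset_of_mem hne.some_mem).trans (hc _ hne.some_mem).subset
  isClosed := isClosed_sInter fun K hK => (hc K hK).isClosed
  nonempty :=
    have := hne.to_subtype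
    IsCompact.nonempty_sInter_of_directed_nonempty_isCompact_isClosed
      (IsChain.directedOn hchain.symm) (fun K hK => (hc K hK).nonempty)
      (fun K hK => (hc K hK).isClosed.isCompact) (fun K hK => (hc K hK).isClosed)
  mul_mem a ha b hb K hK := (hc K hK).mul_mem a ha b (hb K hK)

theorem exists_minimal_isClosedLeftIdeal [CompactSpace M] {G : Set M} (hG : IsClosedLeftIdeal G G) :
    ∃ K, Minimal (IsClosedLeftIdeal G) K := by
  refine zorn_superset {K | IsClosedLeftIdeal G K} fun c hc hchain => ?_
  obtain rfl | hne := c.eq_empty_or_nonempty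
  · exact ⟨G, hG, fun _ h => h.elim⟩
  · exact ⟨⋂₀ c, .sInter hc hchain hne, fun _ => sInter_subset_of_mem⟩

theorem mul_eq_self_of_minimal_isClosedLeftIdeal [CompactSpace M] [T2Space M]
    (hcont : ∀ r : M, Continuous (· * r)) {G K : Set M} (hK : Minimal (IsClosedLeftIdeal G) K)
    {e x : M} (he : e ∈ K) (hee : e * e = e) (hx : x ∈ K) : x * e = x := by
  obtain ⟨hKG, hclosed, hne, hmul⟩ := hK.prop
  have hsub : (· * e) '' K ⊆ K := image_subset_iff.2 fun y hy => hmul y (hKG hy) e he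
  have hideal : IsClosedLeftIdeal G ((· * e) '' K) :=
    { subset := hsub.trans hKG
      isClosed := (hclosed.isCompact.image (hcont e)).isClosed
      nonempty := hne.image _
      mul_mem := by
        rintro a ha _ ⟨y, hy, rfl⟩
        exact ⟨a * y, hmul a ha y hy, mul_assoc _ _ _⟩ }
  obtain ⟨y, -, rfl⟩ := hK.le_of_le hideal hsub hx
  rw [mul_assoc, hee]

end CompactSemigroup

namespace PartialWord

/-- Ultrafilters driving the typed Carlson–Simpson theorem: `U` lives on words without variables,
`V i` on words beginning with a variable, all of whose variables sit in `S i`, and the ultrafilters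
obtained from the `V i` by substitution act as right identities on `U` and on each other. -/
structure IdempotentSystem {ι L : Type*} (S : ι → Set ℕ)
    (U : Ultrafilter (PartialWord (Option L))) (V : ι → Ultrafilter (PartialWord (Option L))) :
    Prop where
  tail_mem : U ∈ tailUltrafilters L ∅
  var_mem : ∀ i, V i ∈ varUltrafilters L (S i)
  left_mul : ∀ i a, U * (V i).map (subst a) = U
  mul : ∀ i a j b, (V i).map (subst a) * (V j).map (subst b) = (V i).map (subst a)

theorem exists_idempotent_of_minimal {L : Type*} {K : Set (Ultrafilter (PartialWord (Option L)))}
    (hK : IsClosedLeftIdeal (tailUltrafilters L ∅) K) {S : Set ℕ} (hS : S.Infinite) :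
    ∃ V ∈ varUltrafilters L S, (∀ a : L, V.map (subst a) ∈ K) ∧ V * V = V := by
  suffices h : ∃ V ∈ varUltrafilters L S ∩ ⋂ a : L, {V | V.map (subst a) ∈ K}, V * V = V by
    obtain ⟨V, ⟨hV, hVK⟩, hVV⟩ := h
    exact ⟨V, hV, mem_iInter.1 hVK, hVV⟩
  refine exists_idempotent_in_compact_subsemigroup Ultrafilter.continuous_mul_left _ ?_ ?_ ?_
  · obtain ⟨U, hU⟩ := hK.nonempty
    obtain ⟨V, hV⟩ := varUltrafilters_nonempty (L := L) hS
    refine ⟨V * U, mul_mem_varUltrafilters hV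
      (tailUltrafilters_mono (empty_subset S) (hK.subset hU)), mem_iInter.2 fun a => ?_⟩
    rw [mem_ofPred_eq, ultrafilter_map_mul (subst_mul a), map_subst_eq_self a (hK.subset hU)]
    exact hK.mul_mem _ (map_subst_mem_tailUltrafilters a hV.1) _ hU
  · exact ((isClosed_varUltrafilters S).inter <| isClosed_iInter fun a =>
      hK.isClosed.preimage (continuous_ultrafilter_map _)).isCompact
  · rintro V ⟨hV, -⟩ W ⟨hW, hWK⟩
    refine ⟨mul_mem_varUltrafilters hV hW.1, mem_iInter.2 fun a => ?_⟩
    rw [mem_ofPred_eq, ultrafilter_map_mul (subst_mul a)]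
    exact hK.mul_mem _ (map_subst_mem_tailUltrafilters a hV.1) _ (mem_iInter.1 hWK a)

theorem exists_idempotentSystem {ι : Type*} (L : Type*) [Nonempty ι] [Nonempty L] {S : ι → Set ℕ}
    (hS : ∀ i, (S i).Infinite) :
    ∃ (U : Ultrafilter (PartialWord (Option L))) (V : ι → Ultrafilter (PartialWord (Option L))),
      IdempotentSystem S U V := by
  have hideal : IsClosedLeftIdeal (tailUltrafilters L ∅) (tailUltrafilters L ∅) :=
    { subset := Subset.rfl
      isClosed := isClosed_tailUltrafilters ∅
      nonempty := by
        obtain ⟨V, hV⟩ := varUltrafilters_nonempty (L := L) (hS (Classical.arbitrary ι))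
        exact ⟨_, map_subst_mem_tailUltrafilters (Classical.arbitrary L) hV.1⟩
      mul_mem := fun _ ha _ hb => mul_mem_tailUltrafilters ha hb }
  obtain ⟨K, hK⟩ := exists_minimal_isClosedLeftIdeal hideal
  choose V hV hVK hVV using fun i => exists_idempotent_of_minimal hK.prop (hS i)
  obtain ⟨U, hU⟩ := hK.prop.nonempty
  have right_identity : ∀ i a, ∀ W ∈ K, W * (V i).map (subst a) = W := fun i a W hW =>
    mul_eq_self_of_minimal_isClosedLeftIdeal Ultrafilter.continuous_mul_left hK (hVK i a)
      (by rw [← ultrafilter_map_mul (subst_mul a), hVV]) hW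
  exact ⟨U, V, hK.prop.subset hU, hV, fun i a => right_identity i a U hU,
    fun i a j b => right_identity j b _ (hVK i a)⟩

section CarlsonSimpson

variable {ι L : Type*} {S : ι → Set ℕ}

/-- The word `w` lies in `A`, and so do almost all of its extensions by instances of type `i`. -/
def Sustains (V : ι → Ultrafilter (PartialWord (Option L))) (A : Set (PartialWord (Option L)))
    (i : ι) (w : PartialWord (Option L)) : Prop :=
  w ∈ A ∧ ∀ a, ∀ᶠ v in V i, w * subst a v ∈ A

theorem IdempotentSystem.eventually_sustains [Finite L]
    {U : Ultrafilter (PartialWord (Option L))} {V : ι → Ultrafilter (PartialWord (Option L))}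
    (h : IdempotentSystem S U V) {A : Set (PartialWord (Option L))} (hA : ∀ᶠ w in U, w ∈ A)
    (i : ι) : ∀ᶠ w in U, Sustains V A i w := by
  refine hA.and (Filter.eventually_all.2 fun a => ?_)
  rw [← h.left_mul i a] at hA
  exact (Ultrafilter.eventually_mul U _ _).1 hA

theorem IdempotentSystem.eventually_sustains_mul [Finite L]
    {U : Ultrafilter (PartialWord (Option L))} {V : ι → Ultrafilter (PartialWord (Option L))}
    (h : IdempotentSystem S U V) {A : Set (PartialWord (Option L))} {i : ι}
    {w : PartialWord (Option L)} (hw : Sustains V A i w) (j : ι) :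
    ∀ᶠ v in V i, ∀ a, Sustains V A j (w * subst a v) := by
  refine Filter.eventually_all.2 fun a => (hw.2 a).and (Filter.eventually_all.2 fun b => ?_)
  have hA : ∀ᶠ u in (V i).map (subst a), w * u ∈ A := hw.2 a
  rw [← h.mul i a j b, Ultrafilter.eventually_mul] at hA
  refine Filter.Eventually.mono (p := fun v => ∀ᶠ u in (V j).map (subst b),
    w * (subst a v * u) ∈ A) hA fun v hv => ?_
  simp only [← mul_assoc] at hv
  exact hv

theorem finite_boundedBy (α : Type*) [Finite α] (N : ℕ) :
    {w : PartialWord α | w.BoundedBy N}.Finite := by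
  refine Finite.of_injective (fun w (i : Fin N) => w.1 i) fun v w hvw =>
    Subtype.ext <| funext fun z => ?_
  rcases lt_or_ge z N with hz | hz
  · exact congrFun hvw ⟨z, hz⟩
  · rw [v.2 z hz, w.2 z hz]

/-- Substitution of `φ` into a word over `L` with variables indexed by `ℕ`; the result is a
variable word without variable. -/
def eval (φ : ℕ → L) : PartialWord (L ⊕ ℕ) → PartialWord (Option L) :=
  map fun o => some (Sum.elim id φ o)

/-- Give the index `j` to the variable of a variable word. -/
def index (j : ℕ) : PartialWord (Option L) → PartialWord (L ⊕ ℕ) :=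
  map fun o => o.elim (Sum.inr j) Sum.inl

theorem eval_mul (φ : ℕ → L) (v w : PartialWord (L ⊕ ℕ)) : eval φ (v * w) = eval φ v * eval φ w :=
  map_mul _ v w

theorem eval_index (φ : ℕ → L) (j : ℕ) (v : PartialWord (Option L)) :
    eval φ (index j v) = subst (φ j) v := by
  funext z
  match h : v z with
  | none | some none | some (some _) => simp only [eval, index, subst, map, h]; rfl

theorem index_apply_eq_inr {j i z : ℕ} {v : PartialWord (Option L)}
    (h : index j v z = some (Sum.inr i)) : i = j ∧ v z = some none := by
  obtain ⟨_ | a, hv, ho⟩ := Option.map_eq_some_iff.1 h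
  · exact ⟨(Sum.inr_injective ho).symm, hv⟩
  · exact absurd ho Sum.inl_ne_inr

theorem VarFirstAt.unique {v : PartialWord (Option L)} {k l : ℕ} (hk : VarFirstAt v k)
    (hl : VarFirstAt v l) : k = l := by
  rcases lt_trichotomy k l with h | h | h
  · exact absurd ((hl.2 k h).symm.trans hk.1) (Option.some_ne_none _).symm
  · exact h
  · exact absurd ((hk.2 l h).symm.trans hl.1) (Option.some_ne_none _).symm

/-- Words `g i` over `L` with indexed variables, each supported below `N i` and obtained from the
previous one by appending a copy of `v i`, whose variable first occurs at `k i` and receives the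
index `i`. -/
structure IsStageSequence (S : ι → Set ℕ) (τ : ℕ → ι) (g : ℕ → PartialWord (L ⊕ ℕ)) (N : ℕ → ℕ)
    (v : ℕ → PartialWord (Option L)) (k : ℕ → ℕ) : Prop where
  zero : ∀ z j, g 0 z ≠ some (Sum.inr j)
  succ : ∀ i, g (i + 1) = g i * index i (v i)
  bounded : ∀ i, (g i).BoundedBy (N i)
  tail : ∀ i, v i ∈ tails L (S (τ i)) (N i)
  first : ∀ i, VarFirstAt (v i) (k i)

namespace IsStageSequence

variable {τ : ℕ → ι} {g : ℕ → PartialWord (L ⊕ ℕ)} {N k : ℕ → ℕ} {v : ℕ → PartialWord (Option L)}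

theorem bound_le (h : IsStageSequence S τ g N v k) (i : ℕ) : N i ≤ k i := by
  by_contra! hlt
  exact absurd (((h.tail i).2.1 _ hlt).symm.trans (h.first i).1) (Option.some_ne_none _).symm

theorem succ_apply_first (h : IsStageSequence S τ g N v k) (i : ℕ) :
    g (i + 1) (k i) = some (Sum.inr i) := by
  rw [h.succ, mul_apply, h.bounded i _ (h.bound_le i), index, map, (h.first i).1]
  rfl

theorem lt_bound (h : IsStageSequence S τ g N v k) (i : ℕ) : k i < N (i + 1) := by
  by_contra! hle
  exact absurd ((h.bounded _ _ hle).symm.trans (h.succ_apply_first i)) (Option.some_ne_none _).symm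

theorem strictMono_bound (h : IsStageSequence S τ g N v k) : StrictMono N :=
  strictMono_nat_of_lt_succ fun i => (h.bound_le i).trans_lt (h.lt_bound i)

theorem strictMono_first (h : IsStageSequence S τ g N v k) : StrictMono k :=
  strictMono_nat_of_lt_succ fun i => (h.lt_bound i).trans_le (h.bound_le (i + 1))

theorem eqOn_succ (h : IsStageSequence S τ g N v k) (i : ℕ) :
    EqOn (g (i + 1)) (g i) (Iio (k i)) := fun z hz => by
  rw [h.succ, mul_apply, index, map_apply_eq_none ((h.first i).2 z hz), Option.or_none]

theorem first_le_of_apply_eq (h : IsStageSequence S τ g N v k) {i z j : ℕ}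
    (hz : g i z = some (Sum.inr j)) : k j ≤ z ∧ z ∈ S (τ j) := by
  induction i with
  | zero => exact absurd hz (h.zero z j)
  | succ i ih =>
    rw [h.succ, mul_apply, Option.or_eq_some_iff] at hz
    rcases hz with hz | ⟨-, hz⟩
    · exact ih hz
    · obtain ⟨rfl, hv⟩ := index_apply_eq_inr hz
      refine ⟨?_, (h.tail j).2.2 z hv⟩
      by_contra! hlt
      exact absurd (((h.first j).2 z hlt).symm.trans hv) (Option.some_ne_none _).symm

theorem exists_limit (h : IsStageSequence S τ g N v k) (a : L) :
    ∃ G : ℕ → L ⊕ ℕ, (∀ j, G (k j) = Sum.inr j) ∧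
      (∀ z j, G z = Sum.inr j → k j ≤ z ∧ z ∈ S (τ j)) ∧
      ∀ j, ∀ z < k j, G z = (g j z).getD (Sum.inl a) := by
  have hstable : ∀ j, EqOn (g (j + 1)) (g j) (Iio (N j)) := fun j =>
    (h.eqOn_succ j).mono (Iio_subset_Iio (h.bound_le j))
  obtain ⟨G, hG⟩ := exists_limit_of_stable h.strictMono_bound hstable
  refine ⟨fun z => (G z).getD (Sum.inl a), fun j => ?_, fun z j hz => ?_, fun j z hz => ?_⟩
  · simp only [hG (j + 1) (h.lt_bound j), h.succ_apply_first, Option.getD_some]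
  · have hzN : z < N (z + 1) := (Nat.lt_succ_self z).trans_le h.strictMono_bound.le_apply
    match hGz : G z with
    | none => simp only [hGz, Option.getD_none, reduceCtorEq] at hz
    | some o =>
      simp only [hGz, Option.getD_some] at hz
      exact h.first_le_of_apply_eq ((hG (z + 1) hzN).symm.trans (hGz.trans (congrArg some hz)))
  · simp only [hG (j + 1) (hz.trans (h.lt_bound j)), h.eqOn_succ j hz]

end IsStageSequence

theorem IdempotentSystem.exists_extension [Finite L]
    {U : Ultrafilter (PartialWord (Option L))} {V : ι → Ultrafilter (PartialWord (Option L))}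
    (hUV : IdempotentSystem S U V) {A : Set (PartialWord (Option L))} {t : ι} {ε : Prop}
    {P : PartialWord (Option L) → PartialWord (Option L) → Prop}
    (hA : ∀ w ∈ A, (∀ᶠ v in V t, P w v) ↔ ε) {g : PartialWord (L ⊕ ℕ)} {N : ℕ}
    (hg : g.BoundedBy N) {i : ι} (hgA : ∀ φ, Sustains V A i (eval φ g)) (n : ℕ) (j : ι) :
    ∃ v ∈ tails L (S i) N, (∃ k, VarFirstAt v k) ∧
      (∀ φ, Sustains V A j (eval φ (g * index n v))) ∧ (i = t → ∀ φ, P (eval φ g) v ↔ ε) := by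
  have hfin : (range fun φ : ℕ → L => eval φ g).Finite :=
    (finite_boundedBy (Option L) N).subset (range_subset_iff.2 fun φ => hg.map _)
  have hgood : ∀ᶠ v in V i, ∀ w ∈ range fun φ : ℕ → L => eval φ g,
      (∀ a, Sustains V A j (w * subst a v)) ∧ (i = t → (P w v ↔ ε)) := by
    refine (Filter.eventually_all_finite hfin).2 ?_
    rintro _ ⟨φ, rfl⟩
    refine (hUV.eventually_sustains_mul (hgA φ) j).and ?_
    rw [Filter.eventually_imp_distrib_left]
    rintro rfl
    exact (eventually_iff_eventually (V i) _).mono fun v hv => hv.trans (hA _ (hgA φ).1)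
  obtain ⟨v, hv, hvN, hfirst⟩ := (hgood.and (((hUV.var_mem i).1 N).and (hUV.var_mem i).2)).exists
  refine ⟨v, hvN, hfirst, fun φ => ?_, fun hi φ => (hv _ ⟨φ, rfl⟩).2 hi⟩
  rw [eval_mul, eval_index]
  exact (hv _ ⟨φ, rfl⟩).1 _

theorem exists_isStageSequence [Nonempty ι] [Finite L] [Nonempty L] (hS : ∀ i, (S i).Infinite)
    (τ : ℕ → ι) (t : ι) (P : PartialWord (Option L) → PartialWord (Option L) → Prop) :
    ∃ g N v k, IsStageSequence S τ g N v k ∧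
      ∃ ε : Prop, ∀ i, τ i = t → ∀ φ : ℕ → L, P (eval φ (g i)) (v i) ↔ ε := by
  obtain ⟨U, V, hUV⟩ := exists_idempotentSystem L hS
  let ε : Prop := ∀ᶠ w in U, ∀ᶠ v in V t, P w v
  let A : Set (PartialWord (Option L)) := {w | (∀ᶠ v in V t, P w v) ↔ ε}
  obtain ⟨w₀, hw₀A, hw₀⟩ := ((hUV.eventually_sustains (A := A)
    (eventually_iff_eventually U _) (τ 0)).and (hUV.tail_mem 0)).exists
  obtain ⟨N₀, hN₀⟩ := hw₀.1
  obtain ⟨f, hf0, hinv, hf⟩ := exists_seq_of_invariant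
    (fun i (s : PartialWord (L ⊕ ℕ) × ℕ) =>
      s.1.BoundedBy s.2 ∧ ∀ φ, Sustains V A (τ i) (eval φ s.1))
    (fun i s s' => ∃ v ∈ tails L (S (τ i)) s.2, (∃ k, VarFirstAt v k) ∧ s'.1 = s.1 * index i v ∧
      (τ i = t → ∀ φ, P (eval φ s.1) v ↔ ε))
    (index 0 w₀, N₀)
    ⟨hN₀.map _, fun φ => by rwa [eval_index, subst_eq_self _ hw₀]⟩
    (fun i s ⟨hs, hsA⟩ => by
      obtain ⟨v, hv, hfirst, hvA, hvP⟩ :=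
        hUV.exists_extension (t := t) (fun _ hw => hw) hs hsA i (τ (i + 1))
      obtain ⟨M, hM⟩ := hv.1
      exact ⟨(s.1 * index i v, max s.2 M), ⟨hs.mul (hM.map _), hvA⟩, v, hv, hfirst, rfl, hvP⟩)
  choose v htail hfirst hsucc hP using hf
  choose k hfirst using hfirst
  refine ⟨fun i => (f i).1, fun i => (f i).2, v, k, ⟨fun z j hz => ?_, hsucc,
    fun i => (hinv i).1, htail, hfirst⟩, ε, hP⟩
  rw [hf0] at hz
  exact hw₀.2.2 z (index_apply_eq_inr hz).2

theorem exists_typed_variable_word [Nonempty ι] [Finite L] [Nonempty L]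
    (hS : ∀ i, (S i).Infinite) (τ : ℕ → ι) (t : ι) (C : (ℕ → L) → ℕ → Prop)
    (hC : ∀ w w' l, EqOn w w' (Iio l) → (C w l ↔ C w' l)) :
    ∃ (g : ℕ → L ⊕ ℕ) (k : ℕ → ℕ) (ε : Prop), StrictMono k ∧ (∀ j, g (k j) = Sum.inr j) ∧
      (∀ z j, g z = Sum.inr j → k j ≤ z ∧ z ∈ S (τ j)) ∧
      ∀ j, τ j = t → ∀ φ : ℕ → L, C (Sum.elim id φ ∘ g) (k j) ↔ ε := by
  let a : L := Classical.arbitrary L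
  let fill : PartialWord (Option L) → ℕ → L := fun w z => (w z).join.getD a
  obtain ⟨g, N, v, k, hg, ε, hε⟩ := exists_isStageSequence hS τ t
    fun w v => ∃ k, VarFirstAt v k ∧ C (fill w) k
  obtain ⟨G, hGk, hG, hGg⟩ := hg.exists_limit a
  refine ⟨G, k, ε, hg.strictMono_first, hGk, hG, fun j hj φ => ?_⟩
  have hfill : EqOn (Sum.elim id φ ∘ G) (fill (eval φ (g j))) (Iio (k j)) := fun z hz => by
    simp only [Function.comp, hGg j z hz, fill, eval, map]
    cases g j z <;> rfl
  rw [hC _ _ _ hfill, ← hε j hj φ]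
  exact ⟨fun h => ⟨k j, hg.first j, h⟩, fun ⟨l, hl, h⟩ => (hg.first j).unique hl ▸ h⟩

end CarlsonSimpson

end PartialWord

end Words

/-! ### The Ellentuck theorem -/

section RamseySpaces

/-- The data of an abstract Ramsey space whose finite approximations are cut out by natural numbers:
`cuts E` are the places where `E` may be cut, and `agree p E F` means that `E` and `F` have the same
restriction below `p`. -/
class CutSpace (α : Type*) extends Preorder α where
  cuts : α → Set ℕ
  agree : ℕ → Setoid α

namespace CutSpace

variable {α : Type*} [CutSpace α]

/-- The Ellentuck basic set of all `F ≤ E` that extend the restriction of `H` below the cut `p`. -/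
def nbhd (p : ℕ) (H E : α) : Set α := {F | F ≤ E ∧ agree p F H ∧ p ∈ cuts F}

/-- The first cut after `p`. -/
noncomputable def nextCut (F : α) (p : ℕ) : ℕ := sInf {x ∈ cuts F | p < x}

/-- The Ellentuck topology of a space with cuts. -/
@[reducible]
def ellentuckTopology (α : Type*) [CutSpace α] : TopologicalSpace α where
  IsOpen U := ∀ F ∈ U, ∀ᶠ p in Filter.atTop, p ∈ cuts F → nbhd p F F ⊆ U
  isOpen_univ _ _ := Filter.Eventually.of_forall fun _ _ => subset_univ _
  isOpen_inter U V hU hV F hF := by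
    filter_upwards [hU F hF.1, hV F hF.2] with p hpU hpV hp using subset_inter (hpU hp) (hpV hp)
  isOpen_sUnion S hS F hF := by
    obtain ⟨U, hU, hFU⟩ := hF
    filter_upwards [hS U hU F hFU] with p hp hpF using subset_sUnion_of_subset S U (hp hpF) hU

theorem nbhd_self {p : ℕ} {F E : α} (hF : F ≤ E) (hp : p ∈ cuts F) : F ∈ nbhd p F E :=
  ⟨hF, (agree p).refl F, hp⟩

theorem nbhd_subset_of_le {p : ℕ} {H E F : α} (h : F ≤ E) : nbhd p H F ⊆ nbhd p H E :=
  fun _ hG => ⟨hG.1.trans h, hG.2⟩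

theorem nbhd_congr {p : ℕ} {H K : α} (h : agree p H K) (E : α) : nbhd p H E = nbhd p K E := by
  ext F
  exact ⟨fun hF => ⟨hF.1, (agree p).trans hF.2.1 h, hF.2.2⟩,
    fun hF => ⟨hF.1, (agree p).trans hF.2.1 ((agree p).symm h), hF.2.2⟩⟩

/-- The closure of `X` in the Ellentuck topology: the points all of whose basic neighbourhoods meet
`X`. -/
def ellentuckClosure (X : Set α) : Set α := {F | ∀ G p, F ∈ nbhd p G G → ¬ nbhd p G G ⊆ Xᶜ}

theorem subset_ellentuckClosure (X : Set α) : X ⊆ ellentuckClosure X :=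
  fun _ hF _ _ hFG hGX => hGX hFG hF

/-- The completely Ramsey envelope of `souslinCylinder A s`. -/
def souslinEnvelope (A : List ℕ → Set α) (s : List ℕ) : Set α :=
  A s ∩ ellentuckClosure (souslinCylinder A s)

theorem souslinCylinder_subset_souslinEnvelope (A : List ℕ → Set α) (s : List ℕ) :
    souslinCylinder A s ⊆ souslinEnvelope A s :=
  subset_inter (souslinCylinder_subset A s) (subset_ellentuckClosure _)

end CutSpace

open CutSpace

/-- The axioms under which the Ellentuck argument works in a space with cuts. -/
class IsRamseySpace (α : Type*) [CutSpace α] : Prop where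
  cuts_infinite : ∀ E : α, (cuts E).Infinite
  cuts_mono : ∀ {F E : α}, F ≤ E → cuts F ⊆ cuts E
  agree_anti : ∀ {p q : ℕ} {E F : α}, p ≤ q → agree q E F → agree p E F
  mem_cuts_of_agree : ∀ {p x : ℕ} {E F : α}, agree p E F → x < p → x ∈ cuts E → x ∈ cuts F
  finite_quotient : ∀ p, Finite (Quotient (agree p : Setoid α))
  fusion : ∀ (E : ℕ → α) (p : ℕ → ℕ), StrictMono p →
    (∀ j, E (j + 1) ∈ nbhd (p j) (E j) (E j)) → ∃ F, ∀ j, F ∈ nbhd (p j) (E j) (E j)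
  amalgamation : ∀ {p : ℕ} {E G : α}, p ∈ cuts E → G ≤ E → p ∈ cuts G →
    ∃ E' ∈ nbhd p E E, nbhd p G E' ⊆ nbhd p G G
  pigeonhole : ∀ {p : ℕ} {E : α}, p ∈ cuts E → ∀ C : ℕ → Set α,
    (∀ r F F', agree r F F' → F ∈ C r → F' ∈ C r) →
    ∃ G ∈ nbhd p E E, (∀ F ∈ nbhd p G G, F ∈ C (nextCut F p)) ∨
      ∀ F ∈ nbhd p G G, F ∉ C (nextCut F p)

namespace CutSpace

variable {α : Type*} [CutSpace α]

/-- A set is completely Ramsey if every basic set contains a smaller one with the same stem that is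
contained in the set or disjoint from it. -/
def IsCompletelyRamsey (X : Set α) : Prop :=
  ∀ E : α, ∀ p ∈ cuts E, ∃ G ∈ nbhd p E E, nbhd p G G ⊆ X ∨ nbhd p G G ⊆ Xᶜ

/-- A set is completely Ramsey null if every basic set contains a smaller one with the same stem
that is disjoint from the set. -/
def IsCompletelyRamseyNull (X : Set α) : Prop :=
  ∀ E : α, ∀ p ∈ cuts E, ∃ G ∈ nbhd p E E, nbhd p G G ⊆ Xᶜ

theorem IsCompletelyRamsey.compl {X : Set α} (h : IsCompletelyRamsey X) :
    IsCompletelyRamsey Xᶜ := by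
  intro E p hp
  obtain ⟨G, hG, hGX⟩ := h E p hp
  exact ⟨G, hG, by rw [compl_compl]; exact hGX.symm⟩

theorem nextCut_le {F : α} {p x : ℕ} (hx : x ∈ cuts F) (h : p < x) : nextCut F p ≤ x :=
  Nat.sInf_le ⟨hx, h⟩

variable [IsRamseySpace α]

theorem nextCut_mem (F : α) (p : ℕ) : nextCut F p ∈ cuts F ∧ p < nextCut F p :=
  Nat.sInf_mem ((IsRamseySpace.cuts_infinite F).exists_gt p)

theorem nextCut_eq_of_agree {F G : α} {p : ℕ} (h : agree (nextCut F p) G F)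
    (hG : nextCut F p ∈ cuts G) : nextCut G p = nextCut F p := by
  refine (nextCut_le hG (nextCut_mem F p).2).antisymm (le_of_not_gt fun hlt => ?_)
  have hmem := nextCut_mem G p
  exact hlt.not_ge (nextCut_le (IsRamseySpace.mem_cuts_of_agree h hlt hmem.1) hmem.2)

theorem nbhd_anti {p q : ℕ} (hpq : p ≤ q) {H E : α} (hp : p ∈ cuts H) :
    nbhd q H E ⊆ nbhd p H E := by
  intro F hF
  refine ⟨hF.1, IsRamseySpace.agree_anti hpq hF.2.1, ?_⟩
  rcases hpq.eq_or_lt with rfl | hlt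
  · exact hF.2.2
  · exact IsRamseySpace.mem_cuts_of_agree ((agree q).symm hF.2.1) hlt hp

theorem nbhd_subset {p q : ℕ} (hpq : p ≤ q) {E G : α} (hG : G ∈ nbhd p E E) :
    nbhd q G G ⊆ nbhd p E E :=
  (nbhd_anti hpq hG.2.2).trans ((nbhd_congr hG.2.1 G).subset.trans (nbhd_subset_of_le hG.1))

theorem exists_forall_of_dense {κ : Type*} [Finite κ] {p : ℕ} (R : κ → α → Prop)
    (hmono : ∀ k E, ∀ G ∈ nbhd p E E, R k E → R k G)
    (hdense : ∀ k E, p ∈ cuts E → ∃ G ∈ nbhd p E E, R k G) {E : α} (hE : p ∈ cuts E) :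
    ∃ G ∈ nbhd p E E, ∀ k, R k G := by
  suffices h : ∀ s : Set κ, s.Finite → ∃ G ∈ nbhd p E E, ∀ k ∈ s, R k G by
    obtain ⟨G, hG, hR⟩ := h univ finite_univ
    exact ⟨G, hG, fun k => hR k (mem_univ k)⟩
  intro s hs
  induction s, hs using Finite.induction_on with
  | empty => exact ⟨E, nbhd_self le_rfl hE, fun _ h => h.elim⟩
  | @insert k s _ _ ih =>
    obtain ⟨F, hF, hFR⟩ := ih
    obtain ⟨G, hG, hGR⟩ := hdense k F hF.2.2
    exact ⟨G, nbhd_subset le_rfl hF hG,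
      forall_mem_insert.2 ⟨hGR, fun l hl => hmono l F G hG (hFR l hl)⟩⟩

theorem exists_mem_nbhd_forall_stem {Q : ℕ → ℕ → Set α → Prop}
    (hanti : ∀ {i p Y Y'}, Y' ⊆ Y → Q i p Y → Q i p Y')
    (hdense : ∀ i (E : α), ∀ p ∈ cuts E, ∃ G ∈ nbhd p E E, Q i p (nbhd p G G)) {E : α} {p : ℕ}
    (hp : p ∈ cuts E) (N : ℕ) :
    ∃ E' ∈ nbhd p E E, ∀ i ≤ N, ∀ H, Q i p (nbhd p H E') := by
  have := IsRamseySpace.finite_quotient (α := α) p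
  let R : Fin (N + 1) × Quotient (agree p : Setoid α) → α → Prop := fun k E' =>
    ∀ H, ⟦H⟧ = k.2 → Q k.1 p (nbhd p H E')
  suffices hR : ∀ k E', p ∈ cuts E' → ∃ G ∈ nbhd p E' E', R k G by
    obtain ⟨E', hE', h⟩ := exists_forall_of_dense R
      (fun k E' G hG h H hH => hanti (nbhd_subset_of_le hG.1) (h H hH)) hR hp
    exact ⟨E', hE', fun i hi H => h (⟨i, Nat.lt_succ_of_le hi⟩, ⟦H⟧) H rfl⟩
  rintro ⟨i, ⟨K⟩⟩ E' hpE'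
  suffices h : ∃ G ∈ nbhd p E' E', Q i p (nbhd p K G) by
    obtain ⟨G, hG, hQ⟩ := h
    exact ⟨G, hG, fun H hH => by rwa [nbhd_congr (Quotient.exact hH)]⟩
  rcases (nbhd p K E').eq_empty_or_nonempty with hempty | ⟨G₀, hG₀⟩
  · obtain ⟨G, -, hG⟩ := hdense i E' p hpE'
    exact ⟨E', nbhd_self le_rfl hpE', hempty ▸ hanti (empty_subset _) hG⟩
  · obtain ⟨G, hG, hGQ⟩ := hdense i G₀ p hG₀.2.2
    obtain ⟨F, hF, hFG⟩ := IsRamseySpace.amalgamation hpE' (hG.1.trans hG₀.1) hG.2.2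
    refine ⟨F, hF, ?_⟩
    rw [← nbhd_congr ((agree p).trans hG.2.1 hG₀.2.1)]
    exact hanti hFG hGQ

theorem exists_mem_nbhd_forall_cut {Q : ℕ → ℕ → Set α → Prop}
    (hanti : ∀ {i p Y Y'}, Y' ⊆ Y → Q i p Y → Q i p Y')
    (hdense : ∀ i (E : α), ∀ p ∈ cuts E, ∃ G ∈ nbhd p E E, Q i p (nbhd p G G)) {E : α} {p : ℕ}
    (hp : p ∈ cuts E) :
    ∃ F ∈ nbhd p E E, ∀ i, ∀ q ∈ cuts F, p + i ≤ q → ∀ H, Q i q (nbhd q H F) := by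
  obtain ⟨f, hf0, -, hf⟩ := exists_seq_of_invariant
    (fun _ (s : α × ℕ) => s.2 ∈ cuts s.1)
    (fun _ s s' => s'.1 ∈ nbhd s.2 s.1 s.1 ∧ s'.2 = nextCut s'.1 s.2 ∧
      ∀ i ≤ s.2, ∀ H, Q i s.2 (nbhd s.2 H s'.1)) (E, p) hp
    (fun _ s hs => by
      obtain ⟨E', hE', hQ⟩ := exists_mem_nbhd_forall_stem (Q := Q) hanti hdense hs s.2
      exact ⟨(E', nextCut E' s.2), (nextCut_mem E' s.2).1, hE', rfl, hQ⟩)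
  have hmono : StrictMono fun j => (f j).2 := strictMono_nat_of_lt_succ fun j => by
    rw [(hf j).2.1]
    exact (nextCut_mem _ _).2
  obtain ⟨F, hF⟩ := IsRamseySpace.fusion _ _ hmono fun j => (hf j).1
  refine ⟨F, by simpa only [hf0] using hF 0, fun i q hq hpq H => ?_⟩
  obtain ⟨j, hj, hlt⟩ : ∃ j, (f j).2 ≤ q ∧ q < (f (j + 1)).2 := by
    have hunbounded : ∃ j, q < (f j).2 := ⟨q + 1, hmono.le_apply⟩
    obtain ⟨j, hj⟩ : ∃ j, Nat.find hunbounded = j + 1 := Nat.exists_eq_succ_of_ne_zero fun h0 => by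
      have := h0 ▸ Nat.find_spec hunbounded
      rw [hf0] at this
      omega
    exact ⟨j, not_lt.1 (Nat.find_min hunbounded (by omega)), hj ▸ Nat.find_spec hunbounded⟩
  have hq' : q = (f j).2 := by
    refine (hj.eq_or_lt.resolve_right fun hjq => ?_).symm
    have := nextCut_le (IsRamseySpace.mem_cuts_of_agree (hF (j + 1)).2.1 hlt hq) hjq
    rw [← (hf j).2.1] at this
    omega
  subst hq'
  exact hanti (nbhd_subset_of_le (hF (j + 1)).1) ((hf j).2.2 i (by omega) H)

section EllentuckOpen

variable {U : Set α}

theorem exists_nbhd_subset_or_forall_nextCut (U : Set α) (E : α) {p : ℕ} (hp : p ∈ cuts E) :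
    ∃ G ∈ nbhd p E E, nbhd p G G ⊆ U ∨ ∀ F ∈ nbhd p G G, ¬ nbhd (nextCut F p) F F ⊆ U := by
  obtain ⟨F₁, hF₁, hQ⟩ := exists_mem_nbhd_forall_cut
    (Q := fun _ p Y => Y ⊆ U ∨ ∀ F ∈ Y, ¬ nbhd p F F ⊆ U)
    (fun hY h => h.imp hY.trans fun h F hF => h F (hY hF))
    (fun _ E p hp => by
      by_cases h : ∃ G ∈ nbhd p E E, nbhd p G G ⊆ U
      · obtain ⟨G, hG, hGU⟩ := h
        exact ⟨G, hG, Or.inl hGU⟩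
      · exact ⟨E, nbhd_self le_rfl hp, Or.inr fun F hF hFU => h ⟨F, hF, hFU⟩⟩) hp
  obtain ⟨G, hG, hC⟩ := IsRamseySpace.pigeonhole hF₁.2.2 (fun r => {F | nbhd r F F₁ ⊆ U})
    fun r F F' h hF => by rwa [mem_ofPred_eq, ← nbhd_congr h]
  refine ⟨G, nbhd_subset le_rfl hF₁ hG, hC.imp (fun h F hF => ?_) fun h F hF hFU => ?_⟩
  · exact h F hF (nbhd_self (hF.1.trans hG.1) (nextCut_mem F p).1)
  · have hle : F ≤ F₁ := hF.1.trans hG.1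
    have hcut := nextCut_mem F p
    rcases hQ 0 _ (IsRamseySpace.cuts_mono hle hcut.1) hcut.2.le F with hsub | hnot
    · exact h F hF hsub
    · exact hnot F (nbhd_self hle hcut.1) hFU

theorem not_nbhd_subset_of_forall_nextCut {F X : α} {p : ℕ} (hX : X ∈ nbhd p F F)
    (hp : ∀ G ∈ nbhd p F F, ¬ nbhd p G G ⊆ U)
    (hF : ∀ q ∈ cuts F, p ≤ q → nbhd q X F ⊆ U ∨
      ∀ G ∈ nbhd q X F, ¬ nbhd (nextCut G q) G G ⊆ U) (N : ℕ) :
    ∃ q ∈ cuts X, N ≤ q ∧ p ≤ q ∧ ∀ G ∈ nbhd q X F, ¬ nbhd q G G ⊆ U := by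
  induction N with
  | zero => exact ⟨p, hX.2.2, Nat.zero_le _, le_rfl, by rwa [nbhd_congr hX.2.1]⟩
  | succ N ih =>
    obtain ⟨q, hq, hNq, hpq, hq'⟩ := ih
    have hcut := nextCut_mem X q
    refine ⟨nextCut X q, hcut.1, by omega, by omega, fun G hG => ?_⟩
    rw [← nextCut_eq_of_agree hG.2.1 hG.2.2]
    refine (hF q (IsRamseySpace.cuts_mono hX.1 hq) hpq).resolve_left (fun h => ?_) G
      (nbhd_anti hcut.2.le hq hG)
    exact hq' X (nbhd_self hX.1 hq) ((nbhd_subset_of_le hX.1).trans h)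

theorem isCompletelyRamsey_of_isOpen (hU : (ellentuckTopology α).IsOpen U) :
    IsCompletelyRamsey U := by
  intro E p hp
  obtain ⟨F, hF, hQ⟩ := exists_mem_nbhd_forall_cut
    (Q := fun _ p Y => Y ⊆ U ∨ ∀ F ∈ Y, ¬ nbhd (nextCut F p) F F ⊆ U)
    (fun hY h => h.imp hY.trans fun h F hF => h F (hY hF))
    (fun _ E p hp => exists_nbhd_subset_or_forall_nextCut U E hp) hp
  by_cases hex : ∃ G ∈ nbhd p F F, nbhd p G G ⊆ U
  · obtain ⟨G, hG, hGU⟩ := hex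
    exact ⟨G, nbhd_subset le_rfl hF hG, Or.inl hGU⟩
  refine ⟨F, hF, Or.inr fun X hX hXU => ?_⟩
  obtain ⟨N, hN⟩ := Filter.eventually_atTop.1 (hU X hXU)
  obtain ⟨q, hq, hNq, -, hnot⟩ := not_nbhd_subset_of_forall_nextCut hX
    (fun G hG hGU => hex ⟨G, hG, hGU⟩) (fun q hq hpq => hQ 0 q hq hpq X) N
  exact hnot X (nbhd_self hX.1 hq) (hN q hNq hq)

end EllentuckOpen

theorem IsCompletelyRamsey.union {X Y : Set α} (hX : IsCompletelyRamsey X)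
    (hY : IsCompletelyRamsey Y) : IsCompletelyRamsey (X ∪ Y) := by
  intro E p hp
  obtain ⟨G, hG, hGX⟩ := hX E p hp
  obtain ⟨K, hK, hKY⟩ := hY G p hG.2.2
  have hKG : nbhd p K K ⊆ nbhd p G G := nbhd_subset le_rfl hK
  refine ⟨K, nbhd_subset le_rfl hG hK, ?_⟩
  rw [compl_union]
  rcases hGX with h | h
  · exact Or.inl ((hKG.trans h).trans subset_union_left)
  · exact hKY.imp (fun h' => h'.trans subset_union_right) fun h' => subset_inter (hKG.trans h) h'

theorem IsCompletelyRamsey.inter {X Y : Set α} (hX : IsCompletelyRamsey X)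
    (hY : IsCompletelyRamsey Y) : IsCompletelyRamsey (X ∩ Y) := by
  simpa only [compl_union, compl_compl] using (hX.compl.union hY.compl).compl

theorem IsCompletelyRamsey.iUnion {X : ℕ → Set α} (h : ∀ i, IsCompletelyRamsey (X i)) :
    IsCompletelyRamsey (⋃ i, X i) := by
  intro E p hp
  obtain ⟨F, hF, hQ⟩ := exists_mem_nbhd_forall_cut (Q := fun i _ Y => Y ⊆ X i ∨ Y ⊆ (X i)ᶜ)
    (fun hY h => h.imp hY.trans hY.trans) h hp
  have hopen : (ellentuckTopology α).IsOpen (nbhd p F F ∩ ⋃ i, X i) := by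
    rintro G ⟨hG, hGX⟩
    obtain ⟨i, hi⟩ := mem_iUnion.1 hGX
    filter_upwards [Filter.eventually_ge_atTop (p + i)] with q hq hqG
    refine subset_inter (nbhd_subset (by omega) hG) ?_
    rcases hQ i q (IsRamseySpace.cuts_mono hG.1 hqG) hq G with hsub | hnot
    · exact ((nbhd_subset_of_le hG.1).trans hsub).trans (subset_iUnion X i)
    · exact absurd hi (hnot (nbhd_self hG.1 hqG))
  obtain ⟨G, hG, hGX⟩ := isCompletelyRamsey_of_isOpen hopen F p hF.2.2
  refine ⟨G, nbhd_subset le_rfl hF hG, hGX.imp (fun h => h.trans inter_subset_right) ?_⟩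
  exact fun h K hK hKX => h hK ⟨nbhd_subset le_rfl hG hK, hKX⟩

theorem IsCompletelyRamseyNull.iUnion {X : ℕ → Set α} (h : ∀ i, IsCompletelyRamseyNull (X i)) :
    IsCompletelyRamseyNull (⋃ i, X i) := by
  intro E p hp
  obtain ⟨F, hF, hQ⟩ := exists_mem_nbhd_forall_cut (Q := fun i _ Y => Y ⊆ (X i)ᶜ)
    (fun hY h => hY.trans h) h hp
  refine ⟨F, hF, fun G hG hGX => ?_⟩
  obtain ⟨i, hi⟩ := mem_iUnion.1 hGX
  obtain ⟨q, hq, hpq⟩ := (IsRamseySpace.cuts_infinite G).exists_gt (p + i)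
  exact hQ i q (IsRamseySpace.cuts_mono hG.1 hq) hpq.le G (nbhd_self hG.1 hq) hi

section Souslin

theorem isCompletelyRamsey_ellentuckClosure (X : Set α) :
    IsCompletelyRamsey (ellentuckClosure X) := by
  rw [← compl_compl (ellentuckClosure X)]
  refine (isCompletelyRamsey_of_isOpen fun F hF => ?_).compl
  have hF' : ∃ G p, F ∈ nbhd p G G ∧ nbhd p G G ⊆ Xᶜ := by
    simpa only [ellentuckClosure, mem_compl_iff, mem_ofPred_eq, not_forall, not_not,
      exists_prop] using hF
  obtain ⟨G, p, hFG, hGX⟩ := hF'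
  filter_upwards [Filter.eventually_ge_atTop p] with q hq _ K hK hKX
  exact hKX G p (nbhd_subset hq hFG hK) hGX

theorem isCompletelyRamsey_souslinEnvelope {A : List ℕ → Set α}
    (hA : ∀ s, IsCompletelyRamsey (A s)) (s : List ℕ) :
    IsCompletelyRamsey (souslinEnvelope A s) :=
  (hA s).inter (isCompletelyRamsey_ellentuckClosure _)

theorem isCompletelyRamseyNull_souslinEnvelope_diff {A : List ℕ → Set α}
    (hA : ∀ s, IsCompletelyRamsey (A s)) (s : List ℕ) :
    IsCompletelyRamseyNull (souslinEnvelope A s ∩ (⋃ i, souslinEnvelope A (s ++ [i]))ᶜ) := by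
  have hY := isCompletelyRamsey_souslinEnvelope hA
  intro E p hp
  obtain ⟨G, hG, h | h⟩ := (hY s).inter (IsCompletelyRamsey.iUnion fun i => hY _).compl E p hp
  · have hGG : G ∈ nbhd p G G := nbhd_self le_rfl hG.2.2
    refine absurd (fun F hF hFX => (h hF).2 ?_) ((h hGG).1.2 G p hGG)
    exact iUnion_mono (fun i => souslinCylinder_subset_souslinEnvelope A _)
      (souslinCylinder_subset_iUnion A s hFX)
  · exact ⟨G, hG, h⟩

theorem isCompletelyRamsey_souslinOp {A : List ℕ → Set α} (hA : ∀ s, IsCompletelyRamsey (A s)) :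
    IsCompletelyRamsey (souslinOp A) := by
  obtain ⟨f, hf⟩ := exists_surjective_nat (List ℕ)
  let Z : List ℕ → Set α := fun s =>
    souslinEnvelope A s ∩ (⋃ i, souslinEnvelope A (s ++ [i]))ᶜ
  have hnull : IsCompletelyRamseyNull (⋃ n, Z (f n)) :=
    .iUnion fun n => isCompletelyRamseyNull_souslinEnvelope_diff hA (f n)
  have hdiff : souslinEnvelope A [] ∩ (⋃ n, Z (f n))ᶜ ⊆ souslinOp A := by
    rintro F ⟨hF, hFZ⟩
    have hsub : souslinOp (souslinEnvelope A) ⊆ souslinOp A :=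
      iUnion_mono fun x => iInter_mono fun n => inter_subset_left
    refine hsub (mem_souslinOp_of_forall_exists hF fun s hs => mem_iUnion.1 ?_)
    by_contra hno
    obtain ⟨n, rfl⟩ := hf s
    exact hFZ (mem_iUnion.2 ⟨n, hs, hno⟩)
  intro E p hp
  obtain ⟨G, hG, hGY⟩ := isCompletelyRamsey_souslinEnvelope hA [] E p hp
  obtain ⟨K, hK, hKnull⟩ := hnull G p hG.2.2
  have hKG : nbhd p K K ⊆ nbhd p G G := nbhd_subset le_rfl hK
  refine ⟨K, nbhd_subset le_rfl hG hK, hGY.imp (fun h => ?_) fun h => ?_⟩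
  · exact (subset_inter (hKG.trans h) hKnull).trans hdiff
  · rw [souslinOp_eq_souslinCylinder_nil]
    exact (hKG.trans h).trans (compl_subset_compl.2 (souslinCylinder_subset_souslinEnvelope A []))

end Souslin

theorem isCompletelyRamsey_of_souslinMeasurable {X : Set α}
    (hX : SouslinMeasurable (ellentuckTopology α) X) : IsCompletelyRamsey X :=
  hX {Y | IsCompletelyRamsey Y} (fun _ hU => isCompletelyRamsey_of_isOpen hU)
    (fun _ hA => IsCompletelyRamsey.compl hA) (fun _ hA _ hB => IsCompletelyRamsey.union hA hB)
    fun _ hf => isCompletelyRamsey_souslinOp hf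

theorem exists_monochromatic_nbhd {κ : Type*} [Finite κ] {c : α → κ}
    (hc : ∀ k, SouslinMeasurable (ellentuckTopology α) (c ⁻¹' {k})) {E : α} {p : ℕ}
    (hp : p ∈ cuts E) : ∃ G ∈ nbhd p E E, ∀ F ∈ nbhd p G G, c F = c G := by
  obtain ⟨G, hG, h⟩ := exists_forall_of_dense
    (fun k G => nbhd p G G ⊆ c ⁻¹' {k} ∨ nbhd p G G ⊆ (c ⁻¹' {k})ᶜ)
    (fun k E G hG h => h.imp (nbhd_subset le_rfl hG).trans (nbhd_subset le_rfl hG).trans)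
    (fun k E hE => isCompletelyRamsey_of_souslinMeasurable (hc k) E p hE) hp
  refine ⟨G, hG, fun F hF => ?_⟩
  exact (h (c G)).resolve_right (fun hnot => hnot (nbhd_self le_rfl hG.2.2) rfl) hF

end CutSpace

end RamseySpaces

section SigmaSeq

theorem exists_succ_eq_two_pow_sigmaSeq_mul (k : ℕ) :
    ∃ m, k + 1 = 2 ^ sigmaSeq k * (2 * m + 1) := by
  obtain ⟨r, hr⟩ : 2 ^ sigmaSeq k ∣ k + 1 := pow_padicValNat_dvd
  have hodd : Odd r := by
    refine Nat.not_even_iff_odd.1 fun ⟨m, hm⟩ => ?_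
    exact pow_succ_padicValNat_not_dvd (p := 2) k.succ_ne_zero ⟨m, hr.trans <| by
      rw [hm, ← two_mul, pow_succ, mul_assoc, sigmaSeq]⟩
  exact hodd.imp fun m hm => by rw [hr, hm]

theorem sigmaSeq_eq {k t m : ℕ} (h : k + 1 = 2 ^ t * (2 * m + 1)) : sigmaSeq k = t := by
  rw [sigmaSeq, h, padicValNat.mul (by positivity) (by positivity), padicValNat.prime_pow,
    padicValNat.eq_zero_of_not_dvd (by omega), add_zero]

theorem sigmaSeq_two_pow_sub_one (t : ℕ) : sigmaSeq (2 ^ t - 1) = t :=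
  sigmaSeq_eq (m := 0) (by rw [Nat.sub_add_cancel Nat.one_le_two_pow, mul_zero, zero_add, mul_one])

theorem two_pow_sigmaSeq_le (k : ℕ) : 2 ^ sigmaSeq k ≤ k + 1 :=
  Nat.le_of_dvd k.succ_pos pow_padicValNat_dvd

theorem exists_ge_sigmaSeq_eq (t N : ℕ) : ∃ k, N ≤ k ∧ sigmaSeq k = t := by
  have hpos : 0 < 2 ^ t := by positivity
  have hle : 2 * N + 1 ≤ 2 ^ t * (2 * N + 1) := Nat.le_mul_of_pos_left _ hpos
  exact ⟨2 ^ t * (2 * N + 1) - 1, by omega, sigmaSeq_eq (m := N) (by omega)⟩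

end SigmaSeq

/-! ### Alternating equivalence relations as functions -/

section AlternatingRep

/-- The number of fixed points of `e` below `x`. -/
abbrev fixCount (e : ℕ → ℕ) (x : ℕ) : ℕ := Nat.count (fun y => e y = y) x

theorem fixCount_congr {e e' : ℕ → ℕ} {x : ℕ} (h : EqOn e e' (Iio x)) :
    fixCount e x = fixCount e' x := by
  simp only [fixCount, Nat.count_eq_card_filter_range]
  congr 1
  refine Finset.filter_congr fun y hy => ?_
  rw [h (Finset.mem_range.1 hy)]

theorem fixCount_eq_of_forall_ne {e : ℕ → ℕ} {a b : ℕ} (hab : a ≤ b)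
    (h : ∀ y, a ≤ y → y < b → e y ≠ y) : fixCount e b = fixCount e a := by
  induction b, hab using Nat.le_induction with
  | base => rfl
  | succ b hb ih =>
    rw [fixCount, Nat.count_succ, if_neg (h b hb b.lt_succ_self), add_zero]
    exact ih fun y hy hyb => h y hy (hyb.trans b.lt_succ_self)

/-- An alternating equivalence relation, represented by the function that sends a point to the
minimum of its class. Here `ty x` is the index of the piece of the partition that contains `x`. -/
@[ext]
structure AlternatingRep (ty : ℕ → ℕ) (I : ℕ → Set ℕ) where
  toFun : ℕ → ℕ
  map_le : ∀ x, toFun x ≤ x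
  map_map : ∀ x, toFun (toFun x) = toFun x
  type_mem : ∀ x, ty x ∈ I (ty (toFun x))
  infinite_fixed : {x | toFun x = x}.Infinite
  type_eq : ∀ x, toFun x = x → ty x = sigmaSeq (fixCount toFun x)

namespace AlternatingRep

variable {ty : ℕ → ℕ} {I : ℕ → Set ℕ} {E F G : AlternatingRep ty I}

instance : CoeFun (AlternatingRep ty I) fun _ => ℕ → ℕ := ⟨toFun⟩

/-- `F ≤ E` means that `F` is a coarsening of `E`. -/
instance : PartialOrder (AlternatingRep ty I) where
  le F E := ∀ x, F (E x) = F x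
  le_refl E := E.map_map
  le_trans F E D hFE hED x := by rw [← hFE (D x), hED x, hFE x]
  le_antisymm F E hFE hEF := by
    ext x
    have hle : ∀ {F E : AlternatingRep ty I}, (∀ x, F (E x) = F x) → F x ≤ E x := fun h =>
      (h x).symm.trans_le (map_le _ _)
    exact (hle hFE).antisymm (hle hEF)

theorem fixed_of_le (h : F ≤ E) {x : ℕ} (hx : F x = x) : E x = x :=
  (E.map_le x).antisymm (calc
    x = F x := hx.symm
    _ = F (E x) := (h x).symm
    _ ≤ E x := F.map_le _)

/-- The class of `E` with minimum `x` may be merged into a class whose minimum has type `t`. -/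
def Absorbable (E : AlternatingRep ty I) (t x : ℕ) : Prop := ∀ z, E z = x → ty z ∈ I t

theorem absorbable_type (E : AlternatingRep ty I) (x : ℕ) : E.Absorbable (ty x) x :=
  fun z hz => hz ▸ E.type_mem z

theorem Absorbable.of_le (h : F ≤ E) {t z : ℕ} (ha : F.Absorbable t (F z)) : E.Absorbable t z :=
  fun y hy => ha y (by rw [← h y, hy])

theorem absorbable_type_map (h : F ≤ E) (z : ℕ) : E.Absorbable (ty (F z)) z :=
  .of_le h (F.absorbable_type _)

/-- The `k`-th fixed point. -/
noncomputable def nthFixed (E : AlternatingRep ty I) (k : ℕ) : ℕ := Nat.nth (fun y => E y = y) k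

theorem map_nthFixed (E : AlternatingRep ty I) (k : ℕ) : E (E.nthFixed k) = E.nthFixed k :=
  Nat.nth_mem_of_infinite E.infinite_fixed k

theorem fixCount_nthFixed (E : AlternatingRep ty I) (k : ℕ) : fixCount E (E.nthFixed k) = k :=
  Nat.count_nth_of_infinite E.infinite_fixed k

theorem nthFixed_strictMono (E : AlternatingRep ty I) : StrictMono E.nthFixed :=
  Nat.nth_strictMono E.infinite_fixed

theorem nthFixed_fixCount {x : ℕ} (hx : E x = x) : E.nthFixed (fixCount E x) = x :=
  Nat.nth_count hx

theorem nthFixed_congr {n p : ℕ} (h : EqOn F G (Iio (p + 1))) (hp : G.nthFixed n ≤ p) :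
    F.nthFixed n = G.nthFixed n := by
  have hle : G.nthFixed n < p + 1 := Nat.lt_succ_of_le hp
  have hcount : fixCount F (G.nthFixed n) = n :=
    (fixCount_congr (h.mono (Iio_subset_Iio hle.le))).trans (G.fixCount_nthFixed n)
  calc
    F.nthFixed n = F.nthFixed (fixCount F (G.nthFixed n)) := by rw [hcount]
    _ = G.nthFixed n := F.nthFixed_fixCount ((h hle).trans (G.map_nthFixed n))

theorem type_nthFixed (E : AlternatingRep ty I) (k : ℕ) : ty (E.nthFixed k) = sigmaSeq k :=
  (E.type_eq _ (E.map_nthFixed k)).trans (congrArg sigmaSeq (E.fixCount_nthFixed k))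

theorem exists_ge_fixed_of_type (E : AlternatingRep ty I) (t N : ℕ) :
    ∃ x, N ≤ x ∧ E x = x ∧ ty x = t := by
  obtain ⟨k, hNk, hk⟩ := exists_ge_sigmaSeq_eq t N
  exact ⟨E.nthFixed k, hNk.trans E.nthFixed_strictMono.le_apply, E.map_nthFixed k,
    (E.type_nthFixed k).trans hk⟩

theorem infinite_fixed_of_type (E : AlternatingRep ty I) (t N : ℕ) :
    {x | N ≤ x ∧ E x = x ∧ ty x = t}.Infinite :=
  infinite_of_forall_exists_gt fun a => by
    obtain ⟨x, hx, hEx, htx⟩ := E.exists_ge_fixed_of_type t (max N (a + 1))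
    exact ⟨x, ⟨by omega, hEx, htx⟩, by omega⟩

theorem exists_fixed_sequence (E : AlternatingRep ty I) (N n : ℕ) :
    ∃ κ : ℕ → ℕ, StrictMono κ ∧ N ≤ κ 0 ∧ (∀ j, E (κ j) = κ j) ∧
      ∀ j, ty (κ j) = sigmaSeq (n + j) := by
  obtain ⟨x, hNx, hEx, htx⟩ := E.exists_ge_fixed_of_type (sigmaSeq n) N
  obtain ⟨κ, hκ₀, hκ, hlt⟩ := exists_seq_of_invariant
    (fun j x => E x = x ∧ ty x = sigmaSeq (n + j)) (fun _ x y => x < y) x ⟨hEx, htx⟩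
    fun j x _ => by
      obtain ⟨y, hxy, hy⟩ := E.exists_ge_fixed_of_type (sigmaSeq (n + (j + 1))) (x + 1)
      exact ⟨y, hy, hxy⟩
  exact ⟨κ, strictMono_nat_of_lt_succ hlt, hκ₀ ▸ hNx, fun j => (hκ j).1, fun j => (hκ j).2⟩

/-- Data for coarsening `E` from `p` on: a fixed point `z ≥ p` of `E` is sent to `target z`, and
`fixed` enumerates the fixed points at or above `p` that survive. -/
structure Collapse (E : AlternatingRep ty I) (p : ℕ) where
  fixed : ℕ → ℕ
  target : ℕ → ℕ
  strictMono_fixed : StrictMono fixed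
  le_fixed_zero : p ≤ fixed 0
  map_fixed : ∀ j, E (fixed j) = fixed j
  type_fixed : ∀ j, ty (fixed j) = sigmaSeq (fixCount E p + j)
  target_fixed : ∀ j, target (fixed j) = fixed j
  target_le : ∀ z, p ≤ z → E z = z → target z ≤ z
  target_mem : ∀ z, p ≤ z → E z = z →
    target z < p ∧ E (target z) = target z ∨ target z ∈ range fixed
  absorbable : ∀ z, p ≤ z → E z = z → E.Absorbable (ty (target z)) z

namespace Collapse

variable {p : ℕ} (D : Collapse E p)

/-- The function underlying the coarsening defined by collapse data. -/
def map (x : ℕ) : ℕ := if E x < p then E x else D.target (E x)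

theorem le_fixed (j : ℕ) : p ≤ D.fixed j :=
  D.le_fixed_zero.trans (D.strictMono_fixed.monotone j.zero_le)

theorem map_eqOn : EqOn D.map E (Iio p) := fun x hx => if_pos ((E.map_le x).trans_lt hx)

theorem map_apply_fixed (j : ℕ) : D.map (D.fixed j) = D.fixed j := by
  rw [map, D.map_fixed, if_neg (D.le_fixed j).not_gt, D.target_fixed]

theorem map_mem (x : ℕ) : D.map x < p ∧ E (D.map x) = D.map x ∨ D.map x ∈ range D.fixed := by
  unfold map
  split_ifs with h
  · exact Or.inl ⟨h, E.map_map x⟩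
  · exact D.target_mem _ (not_lt.1 h) (E.map_map x)

theorem map_eq_self_iff {y : ℕ} : D.map y = y ↔ y < p ∧ E y = y ∨ y ∈ range D.fixed := by
  constructor
  · intro h
    simpa only [h] using D.map_mem y
  · rintro (⟨hy, hEy⟩ | ⟨j, rfl⟩)
    · rw [D.map_eqOn hy, hEy]
    · exact D.map_apply_fixed j

theorem fixCount_map {x : ℕ} (hx : x ≤ p) : fixCount D.map x = fixCount E x :=
  fixCount_congr (D.map_eqOn.mono (Iio_subset_Iio hx))

theorem fixCount_map_fixed (j : ℕ) : fixCount D.map (D.fixed j) = fixCount E p + j := by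
  induction j with
  | zero =>
    rw [fixCount_eq_of_forall_ne D.le_fixed_zero, D.fixCount_map le_rfl, add_zero]
    intro y hy hy₀ hfix
    rcases D.map_eq_self_iff.1 hfix with h | ⟨i, rfl⟩
    · exact hy.not_gt h.1
    · exact hy₀.not_ge (D.strictMono_fixed.monotone i.zero_le)
  | succ j ih =>
    have hgap : ∀ y, D.fixed j + 1 ≤ y → y < D.fixed (j + 1) → D.map y ≠ y := by
      intro y hy hy' hfix
      rcases D.map_eq_self_iff.1 hfix with h | ⟨i, rfl⟩
      · have := D.le_fixed j
        omega
      · have hji := D.strictMono_fixed.lt_iff_lt.1 hy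
        have hij := D.strictMono_fixed.lt_iff_lt.1 hy'
        omega
    rw [fixCount_eq_of_forall_ne (D.strictMono_fixed j.lt_succ_self) hgap, fixCount,
      Nat.count_succ, if_pos (D.map_apply_fixed j), ← add_assoc]
    exact congrArg (· + 1) ih

/-- The coarsening defined by collapse data. -/
def toRep : AlternatingRep ty I where
  toFun := D.map
  map_le x := by
    unfold map
    split_ifs with h
    · exact E.map_le x
    · exact (D.target_le _ (not_lt.1 h) (E.map_map x)).trans (E.map_le x)
  map_map x := D.map_eq_self_iff.2 (D.map_mem x)
  type_mem x := by
    unfold map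
    split_ifs with h
    · exact E.type_mem x
    · exact D.absorbable _ (not_lt.1 h) (E.map_map x) x rfl
  infinite_fixed :=
    (infinite_range_of_injective D.strictMono_fixed.injective).mono
      (range_subset_iff.2 D.map_apply_fixed)
  type_eq y hy := by
    rcases D.map_eq_self_iff.1 hy with ⟨hyp, hEy⟩ | ⟨j, rfl⟩
    · rw [D.fixCount_map hyp.le]
      exact E.type_eq y hEy
    · rw [D.fixCount_map_fixed, D.type_fixed]

theorem toRep_le : D.toRep ≤ E := fun x => by
  simp only [toRep, map, E.map_map]

theorem toRep_apply {z : ℕ} (hz : p ≤ z) (hEz : E z = z) : D.toRep z = D.target z := by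
  simp only [toRep, map, hEz, if_neg hz.not_gt]

end Collapse

theorem exists_fusion {E : ℕ → AlternatingRep ty I} {p : ℕ → ℕ} (hp : StrictMono p)
    (hle : ∀ j, E (j + 1) ≤ E j) (heq : ∀ j, EqOn (E (j + 1)) (E j) (Iio (p j)))
    (hfix : ∀ j, E (j + 1) (p j) = p j) :
    ∃ F : AlternatingRep ty I, ∀ j, F ≤ E j ∧ EqOn F (E j) (Iio (p j)) ∧ F (p j) = p j := by
  have hanti : Antitone E := antitone_nat_of_succ_le hle
  obtain ⟨g, hg⟩ := exists_limit_of_stable (f := fun j => (E j).toFun) hp heq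
  have hstage : ∀ x j, ∃ i ≥ j, EqOn g (E i) (Iic x) := fun x j =>
    ⟨max j (x + 1), le_max_left _ _, (hg _).mono fun y (hy : y ≤ x) =>
      (Nat.lt_succ_of_le hy).trans_le ((le_max_right j (x + 1)).trans hp.le_apply)⟩
  have hgp : ∀ j, g (p j) = p j := fun j => (hg (j + 1) (hp j.lt_succ_self)).trans (hfix j)
  have hgle : ∀ x, g x ≤ x := fun x => by
    obtain ⟨i, -, hi⟩ := hstage x 0
    exact hi self_mem_Iic ▸ (E i).map_le x
  let F : AlternatingRep ty I :=
    { toFun := g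
      map_le := hgle
      map_map := fun x => by
        obtain ⟨i, -, hi⟩ := hstage x 0
        rw [hi (hgle x), hi self_mem_Iic, (E i).map_map]
      type_mem := fun x => by
        obtain ⟨i, -, hi⟩ := hstage x 0
        exact hi self_mem_Iic ▸ (E i).type_mem x
      infinite_fixed := (infinite_range_of_injective hp.injective).mono (range_subset_iff.2 hgp)
      type_eq := fun x hx => by
        obtain ⟨i, -, hi⟩ := hstage x 0
        rw [fixCount_congr (hi.mono Iio_subset_Iic_self)]
        exact (E i).type_eq x (hi self_mem_Iic ▸ hx) }
  refine ⟨F, fun j => ⟨fun x => ?_, hg j, hgp j⟩⟩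
  obtain ⟨i, hji, hi⟩ := hstage x j
  exact (hi ((E j).map_le x)).trans ((hanti hji x).trans (hi self_mem_Iic).symm)

section RamseyProperties

variable {m r : ℕ}

/-- Every class of `E` may be merged into a class that begins below `m`. -/
def AbsorbsBelow (E : AlternatingRep ty I) (m : ℕ) : Prop :=
  ∀ x, E x = x → ∃ y < m, E y = y ∧ E.Absorbable (ty y) x

theorem AbsorbsBelow.mono {n : ℕ} (hE : E.AbsorbsBelow m) (h : m ≤ n) : E.AbsorbsBelow n :=
  fun x hx => (hE x hx).imp fun _ hy => ⟨hy.1.trans_le h, hy.2⟩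

theorem exists_amalgam (hGE : G ≤ E) (hG : G.AbsorbsBelow m) :
    ∃ E' ≤ E, EqOn E' E (Iio m) ∧ ∀ F ≤ E', EqOn F G (Iio m) → F ≤ G := by
  obtain ⟨κ, hκ, hmκ, hκG, hκty⟩ := G.exists_fixed_sequence m (fixCount E m)
  have hψ : ∀ g, ∃ v, (g < m → v = g) ∧ (g ∈ range κ → v = g) ∧ (G g = g →
      v ≤ g ∧ (v < m ∧ G v = v ∨ v ∈ range κ) ∧ G.Absorbable (ty v) g) := fun g => by
    by_cases hg : g < m ∨ g ∈ range κ
    · exact ⟨g, fun _ => rfl, fun _ => rfl, fun hGg =>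
        ⟨le_rfl, hg.imp_left fun h => ⟨h, hGg⟩, G.absorbable_type g⟩⟩
    · by_cases hGg : G g = g
      · obtain ⟨y, hym, hGy, hy⟩ := hG g hGg
        exact ⟨y, fun h => (hg (.inl h)).elim, fun h => (hg (.inr h)).elim,
          fun _ => ⟨by omega, .inl ⟨hym, hGy⟩, hy⟩⟩
      · exact ⟨g, fun _ => rfl, fun _ => rfl, fun h => (hGg h).elim⟩
  choose ψ hψm hψκ hψ using hψ
  let D : Collapse E m :=
    { fixed := κ
      target := fun z => ψ (G z)
      strictMono_fixed := hκ
      le_fixed_zero := hmκ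
      map_fixed := fun j => fixed_of_le hGE (hκG j)
      type_fixed := hκty
      target_fixed := fun j => by rw [hκG, hψκ _ (mem_range_self j)]
      target_le := fun z _ _ => (hψ _ (G.map_map z)).1.trans (G.map_le z)
      target_mem := fun z _ _ =>
        (hψ _ (G.map_map z)).2.1.imp_left fun h => ⟨h.1, fixed_of_le hGE h.2⟩
      absorbable := fun z _ _ => .of_le hGE (hψ _ (G.map_map z)).2.2 }
  refine ⟨D.toRep, D.toRep_le, D.map_eqOn, fun F hF hFG => ?_⟩
  have key : ∀ z, E z = z → F (G z) = F z := by
    intro z hz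
    rcases lt_or_ge z m with hzm | hzm
    · rw [hFG ((G.map_le z).trans_lt hzm), G.map_map, hFG hzm]
    · have hDz : D.toRep z = ψ (G z) := D.toRep_apply hzm hz
      rcases lt_or_ge (G z) m with hGz | hGz
      · rw [← hF z, hDz, hψm _ hGz]
      · have hDG : D.toRep (G z) = ψ (G (G z)) :=
          D.toRep_apply hGz (fixed_of_le hGE (G.map_map z))
        rw [← hF (G z), hDG, G.map_map, ← hDz, hF]
  intro x
  rw [← (hF.trans D.toRep_le) x, ← key (E x) (E.map_map x), hGE x]

/-- The minima below `m` of classes of `E`, the alphabet of the words that describe coarsenings. -/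
abbrev Letter (E : AlternatingRep ty I) (m : ℕ) : Type := {y // y < m ∧ E y = y}

theorem finite_letter (E : AlternatingRep ty I) (m : ℕ) : Finite (E.Letter m) :=
  (finite_Iio m).subset fun _ h => h.1

theorem AbsorbsBelow.nonempty_letter (hE : E.AbsorbsBelow m) : Nonempty (E.Letter m) := by
  obtain ⟨y, hym, hEy, -⟩ := hE 0 (Nat.le_zero.1 (E.map_le 0))
  exact ⟨⟨y, hym, hEy⟩⟩

theorem AbsorbsBelow.exists_correction (hE : E.AbsorbsBelow m) :
    ∃ ρ : ℕ → E.Letter m → E.Letter m, (∀ z, E z = z → ∀ a, E.Absorbable (ty (ρ z a)) z) ∧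
      ∀ z (a : E.Letter m), E.Absorbable (ty a) z → ρ z a = a := by
  have h : ∀ z (a : E.Letter m), ∃ b : E.Letter m,
      (E z = z → E.Absorbable (ty b) z) ∧ (E.Absorbable (ty a) z → b = a) := fun z a => by
    by_cases ha : E.Absorbable (ty a) z
    · exact ⟨a, fun _ => ha, fun _ => rfl⟩
    · by_cases hz : E z = z
      · obtain ⟨y, hym, hEy, hy⟩ := hE z hz
        exact ⟨⟨y, hym, hEy⟩, fun _ => hy, fun h => (ha h).elim⟩
      · exact ⟨a, fun h => (hz h).elim, fun _ => rfl⟩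
  choose ρ hρ hρa using h
  exact ⟨ρ, fun z hz a => hρ z a hz, hρa⟩

theorem Collapse.exists_eq_fixed_of_isLeast (D : Collapse E m) (hF : F ≤ D.toRep)
    (hFE : EqOn F E (Iio m)) (hr : IsLeast {x | m ≤ x ∧ F x = x} r) :
    ∃ j, r = D.fixed j ∧ sigmaSeq (fixCount E m + j) = sigmaSeq (fixCount E m) := by
  obtain ⟨hrm, -⟩ | ⟨j, hj⟩ := D.map_eq_self_iff.1 (fixed_of_le hF hr.1.2)
  · exact (hr.1.1.not_gt hrm).elim
  · have hcount : fixCount F r = fixCount E m :=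
      (fixCount_eq_of_forall_ne hr.1.1 fun y hmy hyr hy => hyr.not_ge (hr.2 ⟨hmy, hy⟩)).trans
        (fixCount_congr hFE)
    exact ⟨j, hj.symm, by rw [← D.type_fixed, hj, F.type_eq r hr.1.2, hcount]⟩

section Words

variable (ρ : ℕ → E.Letter m → E.Letter m)

/-- The function coded by the word `w`: the class of `E` with minimum `z ≥ m` is merged into the one
with minimum `w z`, after `ρ` has corrected this letter if the merger is not allowed. -/
def decode (w : ℕ → E.Letter m) (x : ℕ) : ℕ :=
  if E x < m then E x else ρ (E x) (w (E x))

theorem decode_congr {w w' : ℕ → E.Letter m} {l : ℕ}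
    (h : EqOn w w' (Iio l)) : EqOn (decode ρ w) (decode ρ w') (Iio l) := fun x hx => by
  rw [decode, decode, h ((E.map_le x).trans_lt hx)]

variable {ρ}
  (hρ : ∀ z, E z = z → ∀ a, E.Absorbable (ty (ρ z a)) z)
  {g : ℕ → E.Letter m ⊕ ℕ} {k : ℕ → ℕ} (hk : StrictMono k) (hgk : ∀ j, g (k j) = Sum.inr j)
  (hg : ∀ z j, g z = Sum.inr j → k j ≤ z ∧
    z ∈ {x | m ≤ x ∧ E x = x ∧ ty x = sigmaSeq (fixCount E m + j)})

/-- The coarsening coded by an infinite variable word `g` whose `j`-th variable first occurs at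
`k j`. -/
def Collapse.ofWord : Collapse E m :=
  have hkmem := fun j => (hg (k j) j (hgk j)).2
  { fixed := k
    target := fun z => Sum.elim (fun a => (ρ z a : ℕ)) k (g z)
    strictMono_fixed := hk
    le_fixed_zero := (hkmem 0).1
    map_fixed := fun j => (hkmem j).2.1
    type_fixed := fun j => (hkmem j).2.2
    target_fixed := fun j => by rw [hgk, Sum.elim_inr]
    target_le := fun z hmz _ => by
      rcases hgz : g z with a | j
      · exact (ρ z a).2.1.le.trans hmz
      · exact (hg z j hgz).1
    target_mem := fun z _ _ => by
      rcases g z with a | j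
      · exact .inl (ρ z a).2
      · exact .inr (mem_range_self j)
    absorbable := fun z _ hz => by
      rcases hgz : g z with a | j
      · exact hρ z hz a
      · rw [Sum.elim_inr, (hkmem j).2.2, ← (hg z j hgz).2.2.2]
        exact E.absorbable_type z }

theorem exists_eqOn_decode (hρa : ∀ z (a : E.Letter m), E.Absorbable (ty a) z → ρ z a = a)
    (hF : F ≤ (Collapse.ofWord hρ hk hgk hg).toRep) (hFE : EqOn F E (Iio m))
    (hr : IsLeast {x | m ≤ x ∧ F x = x} r) (a : E.Letter m) :
    ∃ φ : ℕ → E.Letter m, EqOn F (decode ρ (Sum.elim id φ ∘ g)) (Iio r) := by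
  set D := Collapse.ofWord hρ hk hgk hg
  have hFE' : F ≤ E := hF.trans D.toRep_le
  have hlt : ∀ x < r, F x < m := fun x hx => not_le.1 fun hmx =>
    ((F.map_le x).trans_lt hx).not_ge (hr.2 ⟨hmx, F.map_map x⟩)
  have hφ : ∀ i, ∃ b : E.Letter m, F (k i) < m → b = F (k i) := fun i => by
    by_cases h : F (k i) < m
    · exact ⟨⟨F (k i), h, fixed_of_le hFE' (F.map_map _)⟩, fun _ => rfl⟩
    · exact ⟨a, fun h' => (h h').elim⟩
  choose φ hφ using hφ
  refine ⟨φ, fun x hx => ?_⟩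
  have hzr : E x < r := (E.map_le x).trans_lt hx
  rw [← hFE' x, decode]
  split_ifs with hzm
  · rw [hFE hzm, E.map_map]
  have hDz : D.toRep (E x) = Sum.elim (fun a => (ρ (E x) a : ℕ)) k (g (E x)) :=
    D.toRep_apply (not_lt.1 hzm) (E.map_map x)
  rcases hgz : g (E x) with b | i <;>
    simp only [hgz, Sum.elim_inl, Sum.elim_inr, Function.comp, id] at hDz ⊢
  · rw [← hF, hDz, hFE (ρ (E x) b).2.1, (ρ (E x) b).2.2]
  · have hki : F (k i) = F (E x) := by rw [← hDz, hF]
    have hφi : (φ i : ℕ) = F (E x) := (hφ i (hki ▸ hlt _ hzr)).trans hki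
    rw [hρa _ _ (hφi ▸ absorbable_type_map hFE' (E x)), hφi]

end Words

theorem exists_homogeneous (hE : E.AbsorbsBelow m) (C : ℕ → (ℕ → ℕ) → Prop)
    (hC : ∀ r f f', EqOn f f' (Iio r) → (C r f ↔ C r f')) :
    ∃ G ≤ E, EqOn G E (Iio m) ∧ ∃ ε : Prop, ∀ F ≤ G, EqOn F G (Iio m) →
      ∀ r, IsLeast {x | m ≤ x ∧ F x = x} r → (C r F ↔ ε) := by
  have := E.finite_letter m
  have := hE.nonempty_letter
  obtain ⟨ρ, hρ, hρa⟩ := hE.exists_correction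
  obtain ⟨g, k, ε, hk, hgk, hg, hε⟩ := PartialWord.exists_typed_variable_word
    (fun t => E.infinite_fixed_of_type t m) (fun j => sigmaSeq (fixCount E m + j))
    (sigmaSeq (fixCount E m)) (fun w l => C l (decode ρ w))
    fun w w' l h => hC l _ _ (decode_congr ρ h)
  let D := Collapse.ofWord hρ hk hgk hg
  refine ⟨D.toRep, D.toRep_le, D.map_eqOn, ε, fun F hF hFD r hr => ?_⟩
  have hFE : EqOn F E (Iio m) := hFD.trans D.map_eqOn
  obtain ⟨j, rfl, hj⟩ := D.exists_eq_fixed_of_isLeast hF hFE hr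
  obtain ⟨φ, hφ⟩ := exists_eqOn_decode hρ hk hgk hg hρa hF hFE hr (Classical.arbitrary _)
  exact (hC _ _ _ hφ).trans (hε j hj φ)

end RamseyProperties

/-! ### Reduced equivalence relations -/

section Reduction

theorem succ_eq_or_three_mul_le (k : ℕ) :
    k + 1 = 2 ^ sigmaSeq k ∨ 3 * 2 ^ sigmaSeq k ≤ k + 1 := by
  obtain ⟨_ | m, hm⟩ := exists_succ_eq_two_pow_sigmaSeq_mul k
  · exact .inl (hm.trans (mul_one _))
  · exact .inr (hm ▸ by rw [mul_comm]; gcongr; omega)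

/-- A strictly increasing reindexing that preserves `σ` and moves the first index with a given
value of `σ` to the second one. -/
def sigmaShift (k : ℕ) : ℕ := k + 2 * 2 ^ Nat.log 2 (k + 1)

theorem lt_sigmaShift (k : ℕ) : k < sigmaShift k :=
  Nat.lt_add_of_pos_right (by positivity)

theorem sigmaShift_strictMono : StrictMono sigmaShift := fun a b hab => by
  have hlog : Nat.log 2 (a + 1) ≤ Nat.log 2 (b + 1) := Nat.log_mono_right (by omega)
  exact add_lt_add_of_lt_of_le hab
    (Nat.mul_le_mul_left 2 (Nat.pow_le_pow_right two_pos hlog))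

theorem sigmaSeq_sigmaShift (k : ℕ) : sigmaSeq (sigmaShift k) = sigmaSeq k := by
  obtain ⟨m, hm⟩ := exists_succ_eq_two_pow_sigmaSeq_mul k
  obtain ⟨d, hd⟩ := Nat.exists_eq_add_of_le
    (Nat.le_log_of_pow_le one_lt_two (two_pow_sigmaSeq_le k))
  refine sigmaSeq_eq (m := m + 2 ^ d) ?_
  calc sigmaShift k + 1 = k + 1 + 2 * 2 ^ (sigmaSeq k + d) := by rw [sigmaShift, hd]; ring
    _ = 2 ^ sigmaSeq k * (2 * m + 1) + 2 * 2 ^ (sigmaSeq k + d) := by rw [← hm]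
    _ = 2 ^ sigmaSeq k * (2 * (m + 2 ^ d) + 1) := by ring

theorem sigmaShift_two_pow_sub_one (t : ℕ) : sigmaShift (2 ^ t - 1) + 1 = 3 * 2 ^ t := by
  have hpos : 0 < 2 ^ t := by positivity
  rw [sigmaShift, Nat.sub_add_cancel hpos, Nat.log_pow one_lt_two]
  omega

/-- The first fixed point of type `t`. -/
noncomputable def first (E : AlternatingRep ty I) (t : ℕ) : ℕ := E.nthFixed (2 ^ t - 1)

theorem map_first (E : AlternatingRep ty I) (t : ℕ) : E (E.first t) = E.first t :=
  E.map_nthFixed _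

theorem type_first (E : AlternatingRep ty I) (t : ℕ) : ty (E.first t) = t :=
  (E.type_nthFixed _).trans (sigmaSeq_two_pow_sub_one t)

theorem first_eq {x t : ℕ} (hx : E x = x) (ht : fixCount E x = 2 ^ t - 1) : E.first t = x := by
  rw [first, ← ht, nthFixed_fixCount hx]

theorem first_strictMono (E : AlternatingRep ty I) : StrictMono E.first := fun s t hst => by
  have : 2 ^ s < 2 ^ t := Nat.pow_lt_pow_right one_lt_two hst
  exact E.nthFixed_strictMono (by have : 0 < 2 ^ s := by positivity
                                  omega)

theorem first_le {x t : ℕ} (hx : E x = x) (ht : t ≤ ty x) : E.first t ≤ x := by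
  rw [← nthFixed_fixCount hx]
  refine E.nthFixed_strictMono.monotone (Nat.sub_le_of_le_add ?_)
  exact (Nat.pow_le_pow_right two_pos (ht.trans_eq (E.type_eq x hx))).trans (two_pow_sigmaSeq_le _)

theorem first_anti (h : F ≤ E) (t : ℕ) : E.first t ≤ F.first t :=
  first_le (fixed_of_le h (F.map_first t)) (F.type_first t).ge

theorem first_eq_of_map_first (h : F ≤ E) {t : ℕ} (ht : F (E.first t) = E.first t) :
    F.first t = E.first t :=
  (first_le ht (E.type_first t).ge).antisymm (first_anti h t)

theorem eqOn_of_first_eq (h : F ≤ E) {t : ℕ} (ht : F.first t = E.first t) :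
    EqOn F E (Iio (E.first t)) := by
  have hcount : fixCount F (E.first t) = fixCount E (E.first t) := by
    rw [← ht]
    exact (F.fixCount_nthFixed _).trans (ht ▸ (E.fixCount_nthFixed _).symm)
  simp only [fixCount, Nat.count_eq_card_filter_range] at hcount
  have hfix := Finset.eq_of_subset_of_card_le
    (Finset.monotone_filter_right _ fun y _ => fixed_of_le h) hcount.ge
  intro y hy
  have hEy : E y ∈ (Finset.range (E.first t)).filter fun y => E y = y :=
    Finset.mem_filter.2 ⟨Finset.mem_range.2 ((E.map_le y).trans_lt hy), E.map_map y⟩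
  rw [← hfix] at hEy
  rw [← h y, (Finset.mem_filter.1 hEy).2]

/-- The least type of a class into which the class of `E` with minimum `x` may be merged. -/
noncomputable def leastType (E : AlternatingRep ty I) (x : ℕ) : ℕ := sInf {t | E.Absorbable t x}

theorem absorbable_leastType (E : AlternatingRep ty I) (x : ℕ) : E.Absorbable (E.leastType x) x :=
  Nat.sInf_mem (s := {t | E.Absorbable t x}) ⟨_, E.absorbable_type x⟩

theorem leastType_le {t x : ℕ} (h : E.Absorbable t x) : E.leastType x ≤ t := Nat.sInf_le h

/-- The first class of type `i` can only be merged into classes of type at least `i`. As these begin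
later, it stays as it is in every coarsening. -/
def Rigid (E : AlternatingRep ty I) (i : ℕ) : Prop := i ≤ E.leastType (E.first i)

theorem Rigid.first_eq {i : ℕ} (hE : E.Rigid i) (h : F ≤ E) : F.first i = E.first i := by
  refine first_eq_of_map_first h ((F.map_le _).antisymm ?_)
  exact (first_anti h i).trans (first_le (F.map_map _)
    (hE.trans (leastType_le (absorbable_type_map h _))))

theorem Rigid.eqOn {i : ℕ} (hE : E.Rigid i) (h : F ≤ E) : EqOn F E (Iio (E.first i)) :=
  eqOn_of_first_eq h (hE.first_eq h)

theorem rigid_of_map_eq_first {i x : ℕ} (h : F ≤ E) (hx : F x = F.first i)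
    (hi : i ≤ E.leastType x) : F.Rigid i :=
  hi.trans (leastType_le (.of_le h (hx ▸ F.absorbable_leastType _)))

theorem Rigid.of_le {i : ℕ} (hE : E.Rigid i) (h : F ≤ E) : F.Rigid i :=
  rigid_of_map_eq_first h (hE.first_eq h ▸ F.map_first i) hE

theorem isMin_of_forall_exists_rigid (h : ∀ N, ∃ i ≥ N, E.Rigid i) : IsMin E := by
  intro F hF x
  obtain ⟨i, hi, hEi⟩ := h (x + 1)
  have hx : x < E.first i := hi.trans E.first_strictMono.le_apply
  rw [hEi.eqOn hF hx, E.map_map]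

theorem exists_rigid_lt (hE : ∀ F ≤ E, ¬ IsMin F) :
    ∃ F ≤ E, ∃ N, ∀ F' ≤ F, ∀ i, F'.Rigid i → i < N := by
  by_contra! hno
  obtain ⟨f, -, hf, hlt⟩ := exists_seq_of_invariant (α := AlternatingRep ty I × ℕ)
    (fun j s => s.1 ≤ E ∧ s.1.Rigid s.2 ∧ j ≤ s.2) (fun _ s s' => s'.1 ≤ s.1 ∧ s.2 < s'.2)
    (E, 0) ⟨le_rfl, Nat.zero_le _, le_rfl⟩ fun j s ⟨hs, _, _⟩ => by
      obtain ⟨F, hF, i, hFi, hi⟩ := hno s.1 hs (s.2 + 1)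
      exact ⟨(F, i), ⟨hF.trans hs, hFi, by omega⟩, hF, hi⟩
  have heq : ∀ j, (f (j + 1)).1.first (f j).2 = (f j).1.first (f j).2 := fun j =>
    (hf j).2.1.first_eq (hlt j).1
  have hp : StrictMono fun j => (f j).1.first (f j).2 := strictMono_nat_of_lt_succ fun j => by
    rw [← heq j]
    exact first_strictMono _ (hlt j).2
  obtain ⟨F, hF⟩ := exists_fusion hp (fun j => (hlt j).1)
    (fun j => (hf j).2.1.eqOn (hlt j).1) fun j => by rw [← heq j, map_first]
  exact hE F ((hF 0).1.trans (hf 0).1) (isMin_of_forall_exists_rigid fun N =>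
    ⟨(f N).2, (hf N).2.2, (hf N).2.1.of_le (hF N).1⟩)

theorem exists_rigid_maximal (hE : ∀ F ≤ E, ¬ IsMin F) :
    ∃ F ≤ E, ∃ s, F.Rigid s ∧ ∀ G ≤ F, ∀ i, G.Rigid i → i ≤ s := by
  obtain ⟨F, hF, N, hN⟩ := exists_rigid_lt hE
  obtain ⟨s, ⟨G, hG, hGs⟩, hs⟩ := BddAbove.exists_isGreatest_of_nonempty
    (S := {i | ∃ G ≤ F, G.Rigid i}) ⟨N, fun i ⟨G, hG, hi⟩ => (hN G hG i hi).le⟩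
    ⟨0, F, le_rfl, Nat.zero_le _⟩
  exact ⟨G, hG.trans hF, s, hGs, fun H hH i hi => hs ⟨H, hH.trans hG, hi⟩⟩

theorem exists_le_map_eq_first {i x : ℕ} (hFE : F ≤ E) (hEx : E x = x) (hFx : F x ≠ x)
    (hi : i ≤ ty (F x)) (hix : E.Absorbable i x) : ∃ G ≤ E, G x = G.first i := by
  classical
  let D : Collapse E 0 :=
    { fixed := F.nthFixed
      target := Function.update F x (F.first i)
      strictMono_fixed := F.nthFixed_strictMono
      le_fixed_zero := Nat.zero_le _
      map_fixed := fun j => fixed_of_le hFE (F.map_nthFixed j)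
      type_fixed := fun j => by rw [fixCount, Nat.count_zero, zero_add, F.type_nthFixed]
      target_fixed := fun j => by
        rw [Function.update_of_ne, F.map_nthFixed]
        exact fun h => hFx (h ▸ F.map_nthFixed j)
      target_le := fun z _ _ => by
        rcases eq_or_ne z x with rfl | hz
        · rw [Function.update_self]
          exact (first_le (F.map_map z) hi).trans (F.map_le z)
        · rw [Function.update_of_ne hz]
          exact F.map_le z
      target_mem := fun z _ _ => by
        rcases eq_or_ne z x with rfl | hz
        · exact .inr ⟨2 ^ i - 1, by rw [Function.update_self, first]⟩
        · exact .inr ⟨_, (nthFixed_fixCount (F.map_map z)).trans (Function.update_of_ne hz ..).symm⟩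
      absorbable := fun z _ _ => by
        rcases eq_or_ne z x with rfl | hz
        · rwa [Function.update_self, F.type_first]
        · rw [Function.update_of_ne hz]
          exact absorbable_type_map hFE z }
  refine ⟨D.toRep, D.toRep_le, ?_⟩
  rw [D.toRep_apply x.zero_le hEx]
  refine (Function.update_self ..).trans (first_eq (D.map_apply_fixed _) ?_).symm
  exact (D.fixCount_map_fixed _).trans (by rw [fixCount, Nat.count_zero, zero_add])

theorem first_le_of_not_isMin {s : ℕ} (hE : ¬ IsMin E)
    (hs : ∀ G ≤ E, ∀ i, G.Rigid i → i ≤ s) :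
    ∃ v, ∀ j, s < E.leastType (E.first j) → E.first j ≤ v := by
  obtain ⟨F, hFE, v, hv⟩ : ∃ F ≤ E, ∃ v, E (F v) ≠ E v := by
    obtain ⟨F, hFE⟩ := not_isMin_iff.1 hE
    exact ⟨F, hFE.le, not_forall.1 hFE.not_ge⟩
  refine ⟨E v, fun j hj => not_lt.1 fun hlt => ?_⟩
  set x := E.first j
  have hFx : F x ≠ x := fun hFx => by
    have hFE' := eqOn_of_first_eq hFE (first_eq_of_map_first hFE hFx) hlt
    exact hv (by rw [← hFE v, hFE', E.map_map, E.map_map])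
  obtain ⟨G, hG, hGx⟩ := exists_le_map_eq_first hFE (E.map_first j) hFx
    (leastType_le (absorbable_type_map hFE x)) (E.absorbable_leastType x)
  exact hj.not_ge (hs G hG _ (rigid_of_map_eq_first hG hGx le_rfl))

theorem exists_shift_target {i x z : ℕ} (hix : E.first i < x)
    (hlast : ∀ j, x < E.first j → E.leastType (E.first j) < i) (hz : E z = z) (hxz : x < z) :
    ∃ w ≤ z, (w < x ∧ E w = w ∨ ∃ j, E.nthFixed (sigmaShift (fixCount E x + j)) = w) ∧
      E.Absorbable (ty w) z := by
  have hty := E.type_eq z hz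
  rcases succ_eq_or_three_mul_le (fixCount E z) with h | h <;> rw [← hty] at h
  · have hfirst : E.first (ty z) = z := first_eq hz (Nat.eq_sub_of_add_eq h)
    have hlt : E.first (E.leastType z) < x :=
      (E.first_strictMono (hfirst ▸ hlast (ty z) (by rwa [hfirst]))).trans hix
    exact ⟨_, (hlt.trans hxz).le, .inl ⟨hlt, E.map_first _⟩,
      by rw [E.type_first]; exact E.absorbable_leastType z⟩
  · rcases lt_or_ge (E.first (ty z)) x with hlt | hge
    · exact ⟨_, (hlt.trans hxz).le, .inl ⟨hlt, E.map_first _⟩,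
        by rw [E.type_first]; exact E.absorbable_type z⟩
    · have hcount : fixCount E x ≤ 2 ^ ty z - 1 :=
        (Nat.count_monotone _ hge).trans_eq (E.fixCount_nthFixed _)
      refine ⟨E.nthFixed (sigmaShift (2 ^ ty z - 1)), ?_, .inr ⟨_, by
        rw [Nat.add_sub_cancel' hcount]⟩, ?_⟩
      · refine (E.nthFixed_strictMono.monotone ?_).trans_eq (nthFixed_fixCount hz)
        have := sigmaShift_two_pow_sub_one (ty z)
        omega
      · rw [E.type_nthFixed, sigmaSeq_sigmaShift, sigmaSeq_two_pow_sub_one]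
        exact E.absorbable_type z

theorem exists_le_map_eq_first_of_shift {i x : ℕ} (hEx : E x = x) (hix : E.first i < x)
    (hi : E.Absorbable i x) (hlast : ∀ j, x < E.first j → E.leastType (E.first j) < i) :
    ∃ F ≤ E, F x = F.first i := by
  set κ : ℕ → ℕ := fun j => E.nthFixed (sigmaShift (fixCount E x + j))
  have hκ : StrictMono κ := fun a b hab =>
    E.nthFixed_strictMono (sigmaShift_strictMono (Nat.add_lt_add_left hab _))
  have hxκ : ∀ j, x < κ j := fun j => by
    refine (nthFixed_fixCount hEx).symm.trans_lt (E.nthFixed_strictMono ?_)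
    exact (Nat.le_add_right _ j).trans_lt (lt_sigmaShift _)
  have htarget : ∀ z, ∃ w, (z ∈ range κ → w = z) ∧ (z = x → w = E.first i) ∧ (x ≤ z → E z = z →
      w ≤ z ∧ (w < x ∧ E w = w ∨ w ∈ range κ) ∧ E.Absorbable (ty w) z) := fun z => by
    by_cases hzκ : z ∈ range κ
    · obtain ⟨j, rfl⟩ := hzκ
      exact ⟨κ j, fun _ => rfl, fun h => ((hxκ j).ne' h).elim,
        fun _ _ => ⟨le_rfl, .inr (mem_range_self j), E.absorbable_type _⟩⟩
    rcases eq_or_ne z x with rfl | hzx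
    · exact ⟨E.first i, fun h => (hzκ h).elim, fun _ => rfl, fun _ _ =>
        ⟨hix.le, .inl ⟨hix, E.map_first i⟩, by rwa [E.type_first]⟩⟩
    · by_cases hz : x ≤ z ∧ E z = z
      · obtain ⟨w, hw⟩ := exists_shift_target hix hlast hz.2 (hz.1.lt_of_ne' hzx)
        exact ⟨w, fun h => (hzκ h).elim, fun h => (hzx h).elim, fun _ _ => hw⟩
      · exact ⟨z, fun _ => rfl, fun h => (hzx h).elim, fun h h' => (hz ⟨h, h'⟩).elim⟩
  choose target hκtarget hxtarget htarget using htarget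
  let D : Collapse E x :=
    { fixed := κ
      target := target
      strictMono_fixed := hκ
      le_fixed_zero := (hxκ 0).le
      map_fixed := fun j => E.map_nthFixed _
      type_fixed := fun j => (E.type_nthFixed _).trans (sigmaSeq_sigmaShift _)
      target_fixed := fun j => hκtarget _ (mem_range_self j)
      target_le := fun z hxz hz => (htarget z hxz hz).1
      target_mem := fun z hxz hz => (htarget z hxz hz).2.1
      absorbable := fun z hxz hz => (htarget z hxz hz).2.2 }
  refine ⟨D.toRep, D.toRep_le, (D.toRep_apply le_rfl hEx).trans ((hxtarget x rfl).trans ?_)⟩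
  exact (first_eq (D.map_eq_self_iff.2 (.inl ⟨hix, E.map_first i⟩))
    ((D.fixCount_map hix.le).trans (E.fixCount_nthFixed _))).symm

theorem leastType_le_of_not_isMin {s x : ℕ} (hE : ¬ IsMin E)
    (hs : ∀ G ≤ E, ∀ i, G.Rigid i → i ≤ s) (hx : E x = x) : E.leastType x ≤ s := by
  by_contra! hsx
  obtain ⟨v, hv⟩ := first_le_of_not_isMin hE hs
  obtain ⟨x, ⟨hx, hsx⟩, hlast⟩ : ∃ x, (E x = x ∧ s < E.leastType x) ∧
      ∀ j, x < E.first j → E.leastType (E.first j) ≤ s := by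
    by_cases hbad : ∃ j, s < E.leastType (E.first j)
    · obtain ⟨_, ⟨j, hj, rfl⟩, hmax⟩ := BddAbove.exists_isGreatest_of_nonempty
        (S := {x | ∃ j, s < E.leastType (E.first j) ∧ E.first j = x})
        ⟨v, fun _ ⟨j, hj, h⟩ => h ▸ hv j hj⟩ (let ⟨j, hj⟩ := hbad; ⟨_, j, hj, rfl⟩)
      exact ⟨E.first j, ⟨E.map_first j, hj⟩, fun l hl => not_lt.1 fun hsl =>
        hl.not_ge (hmax ⟨l, hsl, rfl⟩)⟩
    · exact ⟨x, ⟨hx, hsx⟩, fun j _ => not_lt.1 fun hj => hbad ⟨j, hj⟩⟩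
  have hix : E.first (E.leastType x) < x := by
    refine (first_le hx (leastType_le (E.absorbable_type x))).lt_of_ne fun h => ?_
    exact hsx.not_ge (hs E le_rfl _ (rigid_of_map_eq_first le_rfl (hx.trans h.symm) le_rfl))
  obtain ⟨F, hF, hFx⟩ := exists_le_map_eq_first_of_shift hx hix (E.absorbable_leastType x)
    fun j hj => (hlast j hj).trans_lt hsx
  exact hsx.not_ge (hs F hF _ (rigid_of_map_eq_first hF hFx le_rfl))

/-- Every coarsening of `E` agrees with `E` up to `q` and allows to merge every class into one that
begins at or below `q`. The coarsenings of such an `E` form a Ramsey space. -/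
structure IsReduced (E : AlternatingRep ty I) (q : ℕ) : Prop where
  map_eq : E q = q
  eqOn_Iic : ∀ F ≤ E, EqOn F E (Iic q)
  absorbsBelow : ∀ F ≤ E, F.AbsorbsBelow (q + 1)

theorem exists_isMin_or_isReduced (E : AlternatingRep ty I) :
    (∃ F ≤ E, IsMin F) ∨ ∃ F ≤ E, ∃ q, F.IsReduced q := by
  by_cases! hmin : ∃ F ≤ E, IsMin F
  · exact .inl hmin
  obtain ⟨F, hF, s, hFs, hs⟩ := exists_rigid_maximal hmin
  refine .inr ⟨F, hF, F.first s, F.map_first s, fun G hG y hy => ?_, fun G hG x hx => ?_⟩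
  · rcases (mem_Iic.1 hy).eq_or_lt with rfl | hlt
    · rw [F.map_first, ← hFs.first_eq hG, G.map_first]
    · exact hFs.eqOn hG hlt
  · have hle : G.leastType x ≤ s := leastType_le_of_not_isMin (hmin G (hG.trans hF))
      (fun H hH => hs H (hH.trans hG)) hx
    refine ⟨G.first (G.leastType x), Nat.lt_succ_of_le ?_, G.map_first _, ?_⟩
    · rw [← hFs.first_eq hG]
      exact G.first_strictMono.monotone hle
    · rw [G.type_first]
      exact G.absorbable_leastType x

end Reduction

/-! ### The Ramsey space below a reduced equivalence relation -/

section LowerCone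

open CutSpace

/-- The coarsenings of `E`. The parameter `q` only affects the cuts, which are required to be at
least `q`. -/
def LowerCone (E : AlternatingRep ty I) (_q : ℕ) : Type := Iic E

instance (q : ℕ) : CutSpace (LowerCone E q) where
  toPreorder := inferInstanceAs (Preorder (Iic E))
  cuts F := {p | q ≤ p ∧ F.1 p = p}
  agree p := Setoid.ker fun F => (Iio p).domRestrict F.1

namespace LowerCone

variable {p q : ℕ}

theorem agree_iff {F G : LowerCone E q} : agree p F G ↔ EqOn F.1 G.1 (Iio p) :=
  domRestrict_eq_domRestrict_iff

theorem infinite_cuts (F : LowerCone E q) : (cuts F).Infinite :=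
  (F.1.infinite_fixed.sdiff (finite_Iio q)).mono fun _ hx => ⟨not_lt.1 hx.2, hx.1⟩

theorem isLeast_nextCut (F : LowerCone E q) (hp : q ≤ p) :
    IsLeast {x | p + 1 ≤ x ∧ F.1 x = x} (nextCut F p) := by
  obtain ⟨hcut, hlt⟩ : nextCut F p ∈ {x ∈ cuts F | p < x} :=
    Nat.sInf_mem (F.infinite_cuts.exists_gt p)
  exact ⟨⟨hlt, hcut.2⟩, fun x hx => nextCut_le ⟨hp.trans (Nat.le_of_succ_le hx.1), hx.2⟩ hx.1⟩

theorem finite_quotient (p : ℕ) : Finite (Quotient (agree p : Setoid (LowerCone E q))) := by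
  let below : Quotient (agree p : Setoid (LowerCone E q)) → Fin p → Fin p :=
    Quotient.lift (fun F x => ⟨F.1 x, (F.1.map_le x).trans_lt x.2⟩) fun F G h => by
      funext x
      exact Fin.ext (agree_iff.1 h x.2)
  refine Finite.of_injective below fun F G => Quotient.inductionOn₂ F G fun F G h => ?_
  exact Quotient.sound (agree_iff.2 fun x hx => congrArg Fin.val (congrFun h ⟨x, hx⟩))

theorem fusion (F : ℕ → LowerCone E q) (p : ℕ → ℕ) (hp : StrictMono p)
    (hF : ∀ j, F (j + 1) ∈ nbhd (p j) (F j) (F j)) : ∃ G, ∀ j, G ∈ nbhd (p j) (F j) (F j) := by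
  obtain ⟨G, hG⟩ := exists_fusion (E := fun j => (F j).1) hp (fun j => (hF j).1)
    (fun j => agree_iff.1 (hF j).2.1) fun j => (hF j).2.2.2
  exact ⟨⟨G, (hG 0).1.trans (F 0).2⟩, fun j =>
    ⟨(hG j).1, agree_iff.2 (hG j).2.1, (hF j).2.2.1, (hG j).2.2⟩⟩

theorem eqOn_Iio_succ_of_mem_nbhd {F G H : LowerCone E q} (hF : F ∈ nbhd p G H)
    (hp : p ∈ cuts G) : EqOn F.1 G.1 (Iio (p + 1)) := fun x hx =>
  (Nat.lt_succ_iff_lt_or_eq.1 hx).elim (@agree_iff.1 hF.2.1 x) fun h => by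
    rw [h, hF.2.2.2, hp.2]

theorem mem_nbhd_of_eqOn {F G : LowerCone E q} (hle : F ≤ G) (h : EqOn F.1 G.1 (Iio (p + 1)))
    (hp : p ∈ cuts G) : F ∈ nbhd p G G :=
  ⟨hle, agree_iff.2 (h.mono (Iio_subset_Iio p.le_succ)), hp.1, (h p.lt_succ_self).trans hp.2⟩

end LowerCone

namespace IsReduced

open LowerCone

variable {p q : ℕ}

theorem amalgamation (hE : E.IsReduced q) {F G : LowerCone E q} (hpF : p ∈ cuts F) (hGF : G ≤ F)
    (hpG : p ∈ cuts G) : ∃ F' ∈ nbhd p F F, nbhd p G F' ⊆ nbhd p G G := by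
  obtain ⟨F', hF', heq, hmem⟩ :=
    exists_amalgam hGF ((hE.absorbsBelow G.1 G.2).mono (Nat.succ_le_succ hpG.1))
  exact ⟨⟨F', hF'.trans F.2⟩, mem_nbhd_of_eqOn hF' heq hpF, fun H hH =>
    ⟨hmem H.1 hH.1 (eqOn_Iio_succ_of_mem_nbhd hH hpG), hH.2⟩⟩

theorem pigeonhole (hE : E.IsReduced q) {F : LowerCone E q} (hp : p ∈ cuts F)
    (C : ℕ → Set (LowerCone E q)) (hC : ∀ r F F', agree r F F' → F ∈ C r → F' ∈ C r) :
    ∃ G ∈ nbhd p F F, (∀ H ∈ nbhd p G G, H ∈ C (nextCut H p)) ∨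
      ∀ H ∈ nbhd p G G, H ∉ C (nextCut H p) := by
  have hmem : ∀ r (H : LowerCone E q), H ∈ C r ↔ ∃ H' ∈ C r, EqOn H'.1 H.1 (Iio r) := fun r H =>
    ⟨fun h => ⟨H, h, eqOn_refl _ _⟩, fun ⟨H', hH', h⟩ => hC r H' H (agree_iff.2 h) hH'⟩
  obtain ⟨G, hG, heq, ε, hε⟩ := exists_homogeneous
    ((hE.absorbsBelow F.1 F.2).mono (Nat.succ_le_succ hp.1))
    (fun r f => ∃ H ∈ C r, EqOn H.1 f (Iio r)) fun r f f' h =>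
      exists_congr fun H => and_congr_right fun _ =>
        ⟨fun hH => hH.trans h, fun hH => hH.trans h.symm⟩
  let G' : LowerCone E q := ⟨G, hG.trans F.2⟩
  have hG' : G' ∈ nbhd p F F := mem_nbhd_of_eqOn hG heq hp
  have hH : ∀ H ∈ nbhd p G' G', (H ∈ C (nextCut H p) ↔ ε) := fun H hH => (hmem _ H).trans <|
    hε H.1 hH.1 (eqOn_Iio_succ_of_mem_nbhd hH hG'.2.2) _ (H.isLeast_nextCut hp.1)
  by_cases h : ε
  · exact ⟨G', hG', .inl fun H hHG => (hH H hHG).2 h⟩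
  · exact ⟨G', hG', .inr fun H hHG hmem => h ((hH H hHG).1 hmem)⟩

theorem isRamseySpace (hE : E.IsReduced q) : IsRamseySpace (LowerCone E q) where
  cuts_infinite := infinite_cuts
  cuts_mono h _ hx := ⟨hx.1, fixed_of_le h hx.2⟩
  agree_anti hpq h := agree_iff.2 ((agree_iff.1 h).mono (Iio_subset_Iio hpq))
  mem_cuts_of_agree h hxp hx := ⟨hx.1, (agree_iff.1 h hxp).symm.trans hx.2⟩
  finite_quotient := finite_quotient
  fusion := fusion
  amalgamation := hE.amalgamation
  pigeonhole := hE.pigeonhole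

theorem mem_nbhd_of_le (hE : E.IsReduced q) {F G : LowerCone E q} (h : F ≤ G) : F ∈ nbhd q G G :=
  mem_nbhd_of_eqOn h (fun _ hx => (hE.eqOn_Iic F.1 F.2 (Nat.le_of_lt_succ hx)).trans
    (hE.eqOn_Iic G.1 G.2 (Nat.le_of_lt_succ hx)).symm)
    ⟨le_rfl, (hE.eqOn_Iic G.1 G.2 self_mem_Iic).trans hE.map_eq⟩

end IsReduced

end LowerCone

end AlternatingRep

end AlternatingRep

/-! ### Transfer to equivalence relations -/

section Setoid

/-- The minimum of the `E`-class of `x`. -/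
noncomputable def minRep (E : Setoid ℕ) (x : ℕ) : ℕ := sInf {y | E.r x y}

variable {E : Setoid ℕ} {x y : ℕ}

theorem minRep_le_of_rel (h : E.r x y) : minRep E x ≤ y := Nat.sInf_le h

theorem rel_minRep (E : Setoid ℕ) (x : ℕ) : E.r x (minRep E x) :=
  Nat.sInf_mem (s := {y | E.r x y}) ⟨x, E.refl' x⟩

theorem minRep_eq_minRep_iff : minRep E x = minRep E y ↔ E.r x y := by
  refine ⟨fun h => E.trans' (rel_minRep E x) (h ▸ E.symm' (rel_minRep E y)), fun h => ?_⟩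
  exact (minRep_le_of_rel (E.trans' h (rel_minRep E y))).antisymm
    (minRep_le_of_rel (E.trans' (E.symm' h) (rel_minRep E x)))

theorem minRep_eq_self_iff : minRep E x = x ↔ x ∈ minReps E :=
  ⟨fun h _ hy => h.symm.trans_le (minRep_le_of_rel hy),
    fun h => (minRep_le_of_rel (E.refl' x)).antisymm (h _ (rel_minRep E x))⟩

theorem minRep_minRep (E : Setoid ℕ) (x : ℕ) : minRep E (minRep E x) = minRep E x :=
  minRep_eq_minRep_iff.2 (E.symm' (rel_minRep E x))

theorem ker_minRep (E : Setoid ℕ) : Setoid.ker (minRep E) = E :=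
  Setoid.ext fun _ _ => minRep_eq_minRep_iff

theorem infinite_classes_iff : (classes E).Infinite ↔ {x | minRep E x = x}.Infinite := by
  have himage : classes E = (fun x => {y | E.r x y}) '' {x | minRep E x = x} := by
    refine Subset.antisymm ?_ (image_subset_iff.2 fun x _ => ⟨x, rfl⟩)
    rintro _ ⟨x, rfl⟩
    refine ⟨minRep E x, minRep_minRep E x, ext fun y => ?_⟩
    exact ⟨E.trans' (rel_minRep E x), E.trans' (E.symm' (rel_minRep E x))⟩
  rw [himage, infinite_image_iff]
  intro a ha b hb hab
  have hrel : E.r a b := hab.symm.subset (E.refl' b)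
  exact ha.symm.trans ((minRep_eq_minRep_iff.2 hrel).trans hb)

theorem pRep_eq_nth (E : Setoid ℕ) (k : ℕ) : pRep E k = Nat.nth (fun y => minRep E y = y) k := by
  simp only [pRep, minRep_eq_self_iff]

end Setoid

namespace AlternatingRep

variable {ty : ℕ → ℕ} {I : ℕ → Set ℕ} {E F G : AlternatingRep ty I}

theorem minRep_ker (E : AlternatingRep ty I) : minRep (Setoid.ker E) = E := by
  funext x
  refine (minRep_le_of_rel (E.map_map x).symm).antisymm ?_
  calc
    E x = E (minRep (Setoid.ker E) x) := rel_minRep (Setoid.ker E) x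
    _ ≤ minRep (Setoid.ker E) x := E.map_le _

theorem mem_minReps_ker {x : ℕ} : x ∈ minReps (Setoid.ker E) ↔ E x = x := by
  rw [← minRep_eq_self_iff, minRep_ker]

theorem pRep_ker (E : AlternatingRep ty I) (k : ℕ) : pRep (Setoid.ker E) k = E.nthFixed k := by
  rw [pRep_eq_nth, minRep_ker, nthFixed]

theorem approx_ker_congr {n p : ℕ} (h : EqOn F G (Iio (p + 1))) (hp : G.nthFixed n ≤ p) :
    approx n (Setoid.ker F) = approx n (Setoid.ker G) := by
  ext ⟨a, b⟩
  simp only [approx, mem_ofPred_eq, pRep_ker, nthFixed_congr h hp]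
  refine and_congr_right fun ha => and_congr_right fun hb => ?_
  have hF : ∀ {x}, x < G.nthFixed n → F x = G x := fun hx => h (hx.trans_le (hp.trans p.le_succ))
  exact iff_of_eq (congrArg₂ (· = ·) (hF ha) (hF hb))

theorem ker_mem_EPaltI (E : AlternatingRep ty I) :
    Setoid.ker E ∈ EPaltI (fun n => ty ⁻¹' {n}) I := by
  refine ⟨⟨infinite_classes_iff.2 ?_, fun k => ?_⟩, fun x hx n hn y hy => ⟨ty y, ?_, rfl⟩⟩
  · rw [minRep_ker]
    exact E.infinite_fixed
  · exact (congrArg ty (E.pRep_ker k)).trans (E.type_nthFixed k)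
  · have hyx : E y = x := (Eq.symm hy).trans (mem_minReps_ker.1 hx)
    exact hn ▸ hyx ▸ E.type_mem y

/-- The alternating equivalence relations correspond to the functions representing them. -/
noncomputable def equivEPaltI :
    AlternatingRep ty I ≃ EPaltI (fun n => ty ⁻¹' {n}) I where
  toFun E := ⟨Setoid.ker E, E.ker_mem_EPaltI⟩
  invFun R :=
    { toFun := minRep R
      map_le := fun x => minRep_le_of_rel (R.1.refl' x)
      map_map := minRep_minRep R
      type_mem := fun x => by
        obtain ⟨m, hm, rfl⟩ := R.2.2 _ (minRep_eq_self_iff.1 (minRep_minRep R x)) _ rfl x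
          (R.1.symm' (rel_minRep R x))
        exact hm
      infinite_fixed := infinite_classes_iff.1 R.2.1.1
      type_eq := fun x hx => by
        have hpRep : pRep R (fixCount (minRep R) x) = x :=
          (pRep_eq_nth R _).trans (Nat.nth_count hx)
        calc
          ty x = ty (pRep R (fixCount (minRep R) x)) := by rw [hpRep]
          _ = sigmaSeq (fixCount (minRep R) x) := R.2.1.2 _ }
  left_inv E := by
    ext x
    exact congrFun E.minRep_ker x
  right_inv R := Subtype.ext (ker_minRep R)

theorem coarsens_equivEPaltI_iff :
    Coarsens (equivEPaltI F).1 (equivEPaltI E).1 ↔ F ≤ E :=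
  ⟨fun h x => h _ _ (E.map_map x), fun h a b hab => calc
    F a = F (E a) := (h a).symm
    _ = F (E b) := congrArg F hab
    _ = F b := h b⟩

theorem LowerCone.continuous_equivEPaltI (E : AlternatingRep ty I) (q : ℕ) :
    @Continuous (LowerCone E q) (EPaltI (fun n => ty ⁻¹' {n}) I)
      (CutSpace.ellentuckTopology _) (ellentuckTop _) fun F => equivEPaltI F.1 := by
  refine continuous_generateFrom_iff.2 ?_
  rintro _ ⟨a, R, rfl⟩ F ⟨hFR, n, hn⟩
  filter_upwards [Filter.eventually_ge_atTop (F.1.nthFixed n)] with p hp hpF G hG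
  exact ⟨fun a b hab => coarsens_equivEPaltI_iff.2 hG.1 _ _ (hFR a b hab), n,
    (approx_ker_congr (eqOn_Iio_succ_of_mem_nbhd hG hpF) hp).trans hn⟩

theorem exists_monochromatic {κ : Type*} [Finite κ] {c : EPaltI (fun n => ty ⁻¹' {n}) I → κ}
    (hc : ∀ k, SouslinMeasurable (ellentuckTop (EPaltI (fun n => ty ⁻¹' {n}) I)) (c ⁻¹' {k}))
    (E : AlternatingRep ty I) :
    ∃ F ≤ E, ∀ G ≤ F, c (equivEPaltI G) = c (equivEPaltI F) := by
  obtain ⟨F, hF, hmin⟩ | ⟨F, hF, q, hq⟩ := E.exists_isMin_or_isReduced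
  · exact ⟨F, hF, fun G hG => by rw [hmin.eq_of_le hG]⟩
  have := hq.isRamseySpace
  let top : LowerCone F q := ⟨F, le_refl F⟩
  have hqF : q ∈ CutSpace.cuts top := ⟨le_rfl, hq.map_eq⟩
  obtain ⟨G, -, hG⟩ := CutSpace.exists_monochromatic_nbhd
    (fun k => (hc k).preimage (LowerCone.continuous_equivEPaltI F q)) hqF
  exact ⟨G.1, G.2.trans hF, fun H hHG => hG ⟨H, hHG.trans G.2⟩ (hq.mem_nbhd_of_le hHG)⟩

end AlternatingRep

theorem exists_eq_preimage_singleton {α ι : Type*} {P : ι → Set α}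
    (hdisj : Pairwise (Function.onFun Disjoint P)) (hcov : ⋃ i, P i = univ) :
    ∃ f : α → ι, P = fun i => f ⁻¹' {i} := by
  choose f hf using fun x => mem_iUnion.1 (hcov.ge (mem_univ x))
  refine ⟨f, funext fun i => ext fun x => ⟨fun hx => ?_, ?_⟩⟩
  · exact hdisj.eq (not_disjoint_iff.2 ⟨x, hf x, hx⟩)
  · rintro rfl
    exact hf x

theorem EPaltISouslinColouring_general {κ : Type*} [Finite κ] {P : ℕ → Set ℕ}
    (hdisj : Pairwise (Function.onFun Disjoint P)) (hcov : ⋃ i, P i = univ) {I : ℕ → Set ℕ}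
    {c : EPaltI P I → κ}
    (hc : ∀ k, SouslinMeasurable (ellentuckTop (EPaltI P I)) (c ⁻¹' {k})) (E : EPaltI P I) :
    ∃ F : EPaltI P I, Coarsens F.1 E.1 ∧
      ∀ F₁ F₂ : EPaltI P I, Coarsens F₁.1 F.1 → Coarsens F₂.1 F.1 → c F₁ = c F₂ := by
  obtain ⟨ty, rfl⟩ := exists_eq_preimage_singleton hdisj hcov
  obtain ⟨e, rfl⟩ := AlternatingRep.equivEPaltI.surjective E
  obtain ⟨f, hfe, hf⟩ := AlternatingRep.exists_monochromatic hc e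
  refine ⟨AlternatingRep.equivEPaltI f, AlternatingRep.coarsens_equivEPaltI_iff.2 hfe, ?_⟩
  have hconst : ∀ F, Coarsens F.1 (AlternatingRep.equivEPaltI f).1 →
      c F = c (AlternatingRep.equivEPaltI f) := fun F hF => by
    obtain ⟨g, rfl⟩ := AlternatingRep.equivEPaltI.surjective F
    exact hf g (AlternatingRep.coarsens_equivEPaltI_iff.1 hF)
  exact fun F₁ F₂ h₁ h₂ => (hconst F₁ h₁).trans (hconst F₂ h₂).symm

/-- **Corollary 5.4:** for every finite Souslin measurable colouring of `𝓔^{P,I}_∞`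
and every `E` in the space, there is a coarsening `F ≤ E` in the space such that the
colouring is constant on `𝓔^{P,I}_∞ ↾ F`. -/
theorem EPaltISouslinColouring
    (P : ℕ → Set ℕ)
    (hinf : ∀ i, (P i).Infinite)
    (hdisj : ∀ i j, i ≠ j → Disjoint (P i) (P j))
    (hcov : ⋃ i, P i = Set.univ)
    (hmin : ∀ i j : ℕ, i < j → sInf (P i) < sInf (P j))
    (I : ℕ → Set ℕ) (hI : ∀ n, n ∈ I n)
    (m : ℕ) (c : ↥(EPaltI P I) → Fin m)
    (hc : ∀ i : Fin m, SouslinMeasurable (ellentuckTop (EPaltI P I)) {E | c E = i})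
    (E : ↥(EPaltI P I)) :
    ∃ F : ↥(EPaltI P I), Coarsens F.1 E.1 ∧
      ∀ F₁ F₂ : ↥(EPaltI P I), Coarsens F₁.1 F.1 → Coarsens F₂.1 F.1 → c F₁ = c F₂ :=
  EPaltISouslinColouring_general hdisj hcov hc E

end DualRamsey
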